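/- arXiv:1304.6216 — 6 statements merged into one kernel-verified Lean document; each statement's English description precedes it below -/
import Mathlib

section
/- Let k be a field, let A be a commutative Hopf algebra over k, and suppose A is the union of a directed (under inclusion) family (A_i)_{i ∈ I} of finitely generated sub-Hopf-algebras, where I is a directed index poset. Let B be a torsor algebra for A. Then there exist a directed poset Ω whose cardinality equals the cardinality of I, and a monotone family (B_ω)_{ω ∈ Ω} of nonzero finitely generated k-subalgebras of B (i.e. B_{ω₁} ⊆ B_{ω₂} whenever ω₁ ≤ ω₂), such that B = ⋃_{ω ∈ Ω} B_ω and, for every ω₁ ≤ ω₂ in Ω, the inclusion B_{ω₁} ⊆ B_{ω₂} makes B_{ω₂} a faithfully flat B_{ω₁}-algebra. -/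
open TensorProduct

/-- `S` is a sub-Hopf-algebra of `A`: it is closed under the comultiplication (its image lies in
`S ⊗ S` inside `A ⊗ A`) and under the antipode. -/
def Subalgebra.IsHopfSub (k : Type*) {A : Type*} [CommSemiring k] [Semiring A]
    [HopfAlgebra k A] (S : Subalgebra k A) : Prop :=
  (∀ a ∈ S, Coalgebra.comul (R := k) a ∈
      LinearMap.range (TensorProduct.map S.val.toLinearMap S.val.toLinearMap)) ∧
  (∀ a ∈ S, HopfAlgebra.antipode (R := k) a ∈ S)

/-- `B`, with coaction `ρ`, is a torsor algebra for the Hopf algebra `A`: `B` is a nonzero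
comodule algebra over `A` and the Galois map `B ⊗ B → B ⊗ A`, `b ⊗ b' ↦ (b ⊗ 1) * ρ b'`,
is bijective. -/
structure IsTorsorAlgebra (k : Type*) [CommSemiring k] (A : Type*) [CommSemiring A]
    [HopfAlgebra k A] (B : Type*) [CommSemiring B] [Algebra k B]
    (ρ : B →ₐ[k] B ⊗[k] A) : Prop where
  nontrivial : Nontrivial B
  counit_coaction : ∀ b : B,
    (TensorProduct.rid k B) ((TensorProduct.map LinearMap.id (Coalgebra.counit (R := k))) (ρ b)) = b
  coassoc : ∀ b : B,
    (TensorProduct.assoc k B A A) ((TensorProduct.map ρ.toLinearMap LinearMap.id) (ρ b)) =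
      (TensorProduct.map LinearMap.id (Coalgebra.comul (R := k))) (ρ b)
  galois_bijective : Function.Bijective
    (Algebra.TensorProduct.lift (Algebra.TensorProduct.includeLeft : B →ₐ[k] B ⊗[k] A) ρ
      (fun _ _ => Commute.all _ _))

namespace TorsorAux

open Matrix

theorem rank_lemma {R ι σ : Type*} [CommRing R] [Fintype ι] [DecidableEq ι] [Fintype σ]
    (a : Matrix ι σ R) (b : Matrix σ ι R) (r : R) (h : a * b = r • 1) (hr : ¬ IsNilpotent r) :
    Fintype.card ι ≤ Fintype.card σ := by
  classical
  rw [nilpotent_iff_mem_prime] at hr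
  push Not at hr
  obtain ⟨Q, hQ, hrQ⟩ := hr
  let g := algebraMap R (FractionRing (R ⧸ Q))
  have hg : g r ≠ 0 := by
    intro h0
    apply hrQ
    have : algebraMap (R ⧸ Q) (FractionRing (R ⧸ Q)) (Ideal.Quotient.mk Q r) = 0 := h0
    rw [FaithfulSMul.algebraMap_eq_zero_iff] at this
    exact Ideal.Quotient.eq_zero_iff_mem.mp this
  have h2 : (a.map g) * (b.map g) = g r • 1 := by
    rw [← Matrix.map_mul, h]
    ext i j
    simp [Matrix.one_apply, apply_ite g]
  have h3 := Matrix.rank_mul_le_left (a.map g) (b.map g)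
  rw [h2, Matrix.rank_smul_of_mem_nonZeroDivisors _ (mem_nonZeroDivisors_of_ne_zero hg),
    Matrix.rank_one] at h3
  exact h3.trans (Matrix.rank_le_card_width _)

theorem det_lemma {R ι : Type*} [CommRing R] [Fintype ι] [DecidableEq ι]
    (a b : Matrix ι ι R) (r : R) (h : a * b = r • 1) (x : ι → R) (hx : x ᵥ* b = 0) (l : ι) :
    r ^ Fintype.card ι * x l = 0 := by
  have h1 : b.det • x = 0 := by
    have : x ᵥ* (b * b.adjugate) = 0 := by rw [← Matrix.vecMul_vecMul, hx, Matrix.zero_vecMul]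
    rw [Matrix.mul_adjugate, Matrix.vecMul_smul, Matrix.vecMul_one] at this
    exact this
  have h2 : a.det * b.det = r ^ Fintype.card ι := by
    rw [← Matrix.det_mul, h, Matrix.det_smul, Matrix.det_one, mul_one]
  have := congrFun h1 l
  simp only [Pi.smul_apply, smul_eq_mul, Pi.zero_apply] at this
  rw [← h2, mul_assoc, this, mul_zero]

/-- dual bases modulo a maximal ideal -/
theorem exists_dual {C M : Type*} [CommRing C] [AddCommGroup M] [Module C M] [Module.Finite C M]
    (p : Ideal C) [hp : p.IsMaximal] :
    ∃ (n : ℕ) (φ : Fin n → (M →ₗ[C] C ⧸ p)) (m : Fin n → M),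
      (∀ i j, φ i (m j) = if i = j then 1 else 0) ∧
      (∀ e ∈ p • (⊤ : Submodule C M), ∀ i, φ i e = 0) ∧
      (∀ (x : M) (d : Fin n → C), (∀ i, Ideal.Quotient.mk p (d i) = φ i x) →
        x - ∑ i, d i • m i ∈ p • (⊤ : Submodule C M)) := by
  classical
  let _ := Ideal.Quotient.field p
  let W := M ⧸ p • (⊤ : Submodule C M)
  let b := Module.finBasis (C ⧸ p) W
  choose m hm using fun i => Submodule.mkQ_surjective (p • (⊤ : Submodule C M)) (b i)
  let φ : Fin (Module.finrank (C ⧸ p) W) → (M →ₗ[C] C ⧸ p) := fun i =>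
    ((b.coord i).restrictScalars C).comp (Submodule.mkQ (p • (⊤ : Submodule C M)))
  have hφ : ∀ i x, φ i x = b.repr (Submodule.mkQ (p • (⊤ : Submodule C M)) x) i := fun i x => rfl
  refine ⟨_, φ, m, ?_, ?_, ?_⟩
  · intro i j
    rw [hφ, hm, b.repr_self, Finsupp.single_apply]
    simp [eq_comm]
  · intro e he i
    have h0 : Submodule.mkQ (p • (⊤ : Submodule C M)) e = 0 :=
      (Submodule.Quotient.mk_eq_zero _).mpr he
    rw [hφ, h0]
    simp
  · intro x d hd
    rw [← Submodule.Quotient.mk_eq_zero]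
    change Submodule.mkQ (p • (⊤ : Submodule C M)) _ = 0
    rw [map_sub, map_sum, sub_eq_zero]
    conv_lhs => rw [← b.sum_repr (Submodule.mkQ (p • (⊤ : Submodule C M)) x)]
    refine Finset.sum_congr rfl fun i _ => ?_
    rw [← hφ, ← hd, map_smul, hm]
    rfl

section core

variable {k C A M : Type*} [Field k] [CommRing C] [Algebra k C] [CommRing A] [Algebra k A]
  [AddCommGroup M] [Module k M] [Module C M] [IsScalarTower k C M]

/-- the map `C → C/p ⊗ A` -/
noncomputable def tau (δ : C →ₐ[k] C ⊗[k] A) (p : Ideal C) : C →ₐ[k] (C ⧸ p) ⊗[k] A :=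
  (Algebra.TensorProduct.map (Ideal.Quotient.mkₐ k p) (AlgHom.id k A)).comp δ

/-- action of `C ⊗ A` on `M ⊗ A` -/
noncomputable def act (k C A M : Type*) [Field k] [CommRing C] [Algebra k C] [CommRing A]
    [Algebra k A] [AddCommGroup M] [Module k M] [Module C M] [IsScalarTower k C M] :
    C ⊗[k] A →ₗ[k] M ⊗[k] A →ₗ[k] M ⊗[k] A :=
  TensorProduct.map₂ (Algebra.lsmul k k M).toLinearMap (LinearMap.mul k A)

/-- the condition that `ρ` behaves as a coaction of a Hopf module -/
structure IsHM (δ : C →ₐ[k] C ⊗[k] A) (ρ : M →ₗ[k] M ⊗[k] A) : Prop where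
  smul : ∀ c m, ρ (c • m) = act k C A M (δ c) (ρ m)
  gal : ∀ m, m ⊗ₜ (1 : A) ∈ Submodule.span k
    {x | ∃ m' a, x = (LinearMap.mulRight k a).lTensor M (ρ m')}

/-- coordinates -/
noncomputable def co (p : Ideal C) (φ : M →ₗ[C] C ⧸ p) : M ⊗[k] A →ₗ[k] (C ⧸ p) ⊗[k] A :=
  (φ.restrictScalars k).rTensor A

theorem co_act (δ : C →ₐ[k] C ⊗[k] A) (p : Ideal C) (φ : M →ₗ[C] C ⧸ p) (c : C) (x : M ⊗[k] A) :
    co p φ (act k C A M (δ c) x) = tau δ p c * co p φ x := by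
  unfold tau
  rw [AlgHom.comp_apply]
  generalize δ c = y
  induction y with
  | zero => simp
  | add y z hy hz => simp only [map_add, LinearMap.add_apply, hy, hz, add_mul]
  | tmul c a =>
    induction x with
    | zero => simp
    | add y z hy hz => simp only [map_add, hy, hz, mul_add]
    | tmul m b =>
      simp [co, act, Algebra.smul_def]

theorem co_mulRight (p : Ideal C) (φ : M →ₗ[C] C ⧸ p) (a : A) (x : M ⊗[k] A) :
    co p φ ((LinearMap.mulRight k a).lTensor M x) = (1 ⊗ₜ a) * co p φ x := by
  induction x with
  | zero => simp
  | add y z hy hz => simp only [map_add, hy, hz, mul_add]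
  | tmul m b => simp [co, mul_comm]

theorem core {δ : C →ₐ[k] C ⊗[k] A} {ρ : M →ₗ[k] M ⊗[k] A} (H : IsHM δ ρ)
    (p : Ideal C) {ι σ : Type*} [Fintype ι] [DecidableEq ι] [Fintype σ]
    (φ : ι → (M →ₗ[C] C ⧸ p)) (m : ι → M) (hφ : ∀ i j, φ i (m j) = if i = j then 1 else 0)
    (w : σ → M) (e : M) (c : C) (he : ρ e = e ⊗ₜ 1) (hφe : ∀ i, φ i e = 0)
    (hc : ∀ x : M, ∃ (y : σ → C) (z : C), c • x = ∑ l, y l • w l + z • e) :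
    ∃ a : Matrix ι σ ((C ⧸ p) ⊗[k] A),
      a * (Matrix.of fun l j => co p (φ j) (ρ (w l))) = tau δ p c • 1 := by
  have key : ∀ t ∈ Submodule.span k {x | ∃ m' a, x = (LinearMap.mulRight k a).lTensor M (ρ m')},
      ∃ y : σ → (C ⧸ p) ⊗[k] A, ∀ j, tau δ p c * co p (φ j) t = ∑ l, y l * co p (φ j) (ρ (w l)) := by
    intro t ht
    induction ht using Submodule.span_induction with
    | zero => exact ⟨0, by simp⟩
    | add t s _ _ h1 h2 =>
      obtain ⟨y, hy⟩ := h1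
      obtain ⟨z, hz⟩ := h2
      exact ⟨y + z, fun j => by simp [mul_add, hy, hz, add_mul, Finset.sum_add_distrib]⟩
    | smul r t _ h =>
      obtain ⟨y, hy⟩ := h
      exact ⟨r • y, fun j => by
        rw [map_smul, mul_smul_comm, hy, Finset.smul_sum]
        exact Finset.sum_congr rfl fun l _ => (smul_mul_assoc r (y l) _).symm⟩
    | mem t h =>
      obtain ⟨m', a, rfl⟩ := h
      obtain ⟨y, z, hyz⟩ := hc m'
      refine ⟨fun l => (1 ⊗ₜ a) * tau δ p (y l), fun j => ?_⟩
      have h1 : tau δ p c * co p (φ j) (ρ m') = ∑ l, tau δ p (y l) * co p (φ j) (ρ (w l)) := by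
        rw [← co_act, ← H.smul, hyz, map_add, map_sum, map_add, map_sum, H.smul z e, co_act, he]
        have : co p (φ j) (e ⊗ₜ[k] (1 : A)) = 0 := by simp [co, hφe]
        rw [this, mul_zero, add_zero]
        exact Finset.sum_congr rfl fun l _ => by rw [H.smul, co_act]
      rw [co_mulRight, mul_left_comm, h1, Finset.mul_sum]
      simp only [mul_assoc]
  choose y hy using fun i => key _ (H.gal (m i))
  refine ⟨Matrix.of y, ?_⟩
  ext i j
  rw [Matrix.mul_apply]
  simp only [Matrix.of_apply]
  rw [← hy i j]
  have : co p (φ j) (m i ⊗ₜ[k] (1 : A)) = if i = j then 1 else 0 := by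
    simp only [co, LinearMap.rTensor_tmul, LinearMap.coe_restrictScalars, hφ]
    split_ifs <;> simp_all [Algebra.TensorProduct.one_def]
  rw [this, Matrix.smul_apply, Matrix.one_apply]
  rfl

end core

theorem nak {C M : Type*} [CommRing C] [AddCommGroup M] [Module C M] [Module.Finite C M]
    (p : Ideal C) (N : Submodule C M) (h : ∀ x, x ∈ N ⊔ p • (⊤ : Submodule C M)) :
    ∃ c : C, c - 1 ∈ p ∧ ∀ x : M, c • x ∈ N := by
  obtain ⟨r, hr, h2⟩ := Submodule.exists_sub_one_mem_and_smul_le_of_fg_of_le_sup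
    (I := p) (N := N) (N' := ⊤) (P := ⊤) Module.Finite.fg_top le_top (fun x _ => h x)
  exact ⟨r, hr, fun x => h2 (Submodule.smul_mem_pointwise_smul _ _ _ trivial)⟩

theorem flat_of_local {C M : Type*} [CommRing C] [AddCommGroup M] [Module C M]
    (h : ∀ p : Ideal C, p.IsMaximal → ∃ (u : C) (n : ℕ) (g : (Fin n → C) →ₗ[C] M), u ∉ p ∧
      (∀ x, g x = 0 → u • x = 0) ∧ (∀ m, ∃ x, g x = u • m)) : Module.Flat C M := by
  apply Module.flat_of_localized_maximal
  intro p hp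
  obtain ⟨u, n, g, hu, h1, h2⟩ := h p hp
  let U : p.primeCompl := ⟨u, hu⟩
  let G := IsLocalizedModule.map p.primeCompl
    (LocalizedModule.mkLinearMap p.primeCompl (Fin n → C))
    (LocalizedModule.mkLinearMap p.primeCompl M) g
  have hG : Function.Bijective G := by
    constructor
    · rw [injective_iff_map_eq_zero]
      intro z hz
      obtain ⟨⟨x, s⟩, rfl⟩ := IsLocalizedModule.mk'_surjective p.primeCompl
        (LocalizedModule.mkLinearMap p.primeCompl (Fin n → C)) z
      simp only [Function.uncurry_apply_pair] at hz ⊢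
      rw [IsLocalizedModule.map_mk', IsLocalizedModule.mk'_eq_zero,
        IsLocalizedModule.eq_zero_iff p.primeCompl] at hz
      obtain ⟨v, hv⟩ := hz
      rw [IsLocalizedModule.mk'_eq_zero, IsLocalizedModule.eq_zero_iff p.primeCompl]
      refine ⟨U * v, ?_⟩
      rw [mul_smul]
      apply h1
      rw [← hv]
      exact map_smul g (v : C) x
    · intro z
      obtain ⟨⟨x, s⟩, rfl⟩ := IsLocalizedModule.mk'_surjective p.primeCompl
        (LocalizedModule.mkLinearMap p.primeCompl M) z
      obtain ⟨y, hy⟩ := h2 x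
      refine ⟨IsLocalizedModule.mk'
        (LocalizedModule.mkLinearMap p.primeCompl (Fin n → C)) y (U * s), ?_⟩
      rw [IsLocalizedModule.map_mk', hy]
      simp only [Function.uncurry_apply_pair]
      exact IsLocalizedModule.mk'_cancel_left (f := LocalizedModule.mkLinearMap p.primeCompl M) x U s
  have : Module.Flat C (LocalizedModule p.primeCompl (Fin n → C)) :=
    Module.Flat.trans C (Localization p.primeCompl) _
  exact Module.Flat.of_linearEquiv (LinearEquiv.ofBijective G hG).symm

section main

variable {k C A M : Type*} [Field k] [CommRing C] [Algebra k C] [CommRing A] [Algebra k A]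
  [AddCommGroup M] [Module k M] [Module C M] [IsScalarTower k C M] [Module.Finite C M]

theorem lin_span {C M : Type*} [CommRing C] [AddCommGroup M] [Module C M] {n : ℕ} (c : C) (m : Fin n → M) (h : ∀ x : M, c • x ∈ Submodule.span C (Set.range m))
    (x : M) : ∃ (y : Fin n → C) (z : C), c • x = ∑ l, y l • m l + z • (0 : M) := by
  obtain ⟨y, hy⟩ := (Submodule.mem_span_range_iff_exists_fun C).mp (h x)
  exact ⟨y, 0, by simp [hy]⟩

theorem main {δ : C →ₐ[k] C ⊗[k] A} {ρ : M →ₗ[k] M ⊗[k] A} (H : IsHM δ ρ)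
    (p₀ : Ideal C) [p₀.IsMaximal] (hi : Function.Injective (tau δ p₀))
    (hn : ∀ p : Ideal C, p.IsMaximal → ∀ c, c - 1 ∈ p₀ → ¬ IsNilpotent (tau δ p c)) :
    Module.Flat C M ∧ ∀ e : M, ρ e = e ⊗ₜ 1 → e ∉ p₀ • (⊤ : Submodule C M) →
      ∀ p : Ideal C, p.IsMaximal → e ∉ p • (⊤ : Submodule C M) := by
  classical
  obtain ⟨r, φ₀, m₀, hφ₀, -, hs₀⟩ := exists_dual (M := M) p₀
  have span_lem : ∀ (p : Ideal C) {n : ℕ} (φ : Fin n → (M →ₗ[C] C ⧸ p)) (m : Fin n → M),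
      (∀ (x : M) (d : Fin n → C), (∀ i, Ideal.Quotient.mk p (d i) = φ i x) →
        x - ∑ i, d i • m i ∈ p • (⊤ : Submodule C M)) →
      ∃ c : C, c - 1 ∈ p ∧ ∀ x : M, c • x ∈ Submodule.span C (Set.range m) := by
    intro p n φ m hs
    apply nak
    intro x
    choose d hd using fun i => Ideal.Quotient.mk_surjective (φ i x)
    rw [← sub_add_cancel x (∑ i, d i • m i), add_comm]
    refine Submodule.add_mem_sup (Submodule.sum_mem _ fun i _ => Submodule.smul_mem _ _
      (Submodule.subset_span ⟨i, rfl⟩)) (hs x d hd)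
  have lower : ∀ (p : Ideal C), p.IsMaximal → ∀ {n : ℕ} (m : Fin n → M) (c : C), c - 1 ∈ p →
      (∀ x : M, c • x ∈ Submodule.span C (Set.range m)) → r ≤ n := by
    intro p hp n m c hc hcm
    obtain ⟨a, ha⟩ := core H p₀ φ₀ m₀ hφ₀ m 0 c (by simp) (by simp) (lin_span c m hcm)
    have := rank_lemma _ _ _ ha (by
      rintro ⟨N, hN⟩
      rw [← map_pow] at hN
      have h0 : c ^ N = 0 := hi (hN.trans (map_zero _).symm)
      have h1 : c ∈ p := hp.isPrime.mem_of_pow_mem N (h0 ▸ p.zero_mem)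
      exact hp.ne_top ((Ideal.eq_top_iff_one p).mpr (by simpa using p.sub_mem h1 hc)))
    simpa using this
  constructor
  · apply flat_of_local
    intro p hp
    obtain ⟨n, φ, m, hφ, -, hs⟩ := exists_dual (M := M) p
    obtain ⟨c, hc, hcm⟩ := span_lem p φ m hs
    have h1 := lower p hp m c hc hcm
    have h2 : n ≤ r := by
      obtain ⟨c', hc', hcm'⟩ := span_lem p₀ φ₀ m₀ hs₀
      obtain ⟨a, ha⟩ := core H p φ m hφ m₀ 0 c' (by simp) (by simp) (lin_span c' m₀ hcm')
      simpa using rank_lemma _ _ _ ha (hn p hp c' hc')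
    obtain rfl := le_antisymm h1 h2
    obtain ⟨a, ha⟩ := core H p₀ φ₀ m₀ hφ₀ m 0 c (by simp) (by simp) (lin_span c m hcm)
    have hcp : c ∉ p := fun h => hp.ne_top ((Ideal.eq_top_iff_one p).mpr
      (by simpa using p.sub_mem h hc))
    refine ⟨c ^ (r + 1), r, Fintype.linearCombination C m, fun h => hcp (hp.isPrime.mem_of_pow_mem _ h),
      ?_, ?_⟩
    · intro x hx
      rw [Fintype.linearCombination_apply] at hx
      have hx2 : (fun l => tau δ p₀ (x l)) ᵥ* (Matrix.of fun l j => co p₀ (φ₀ j) (ρ (m l))) = 0 := by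
        ext j
        have : co p₀ (φ₀ j) (ρ (∑ l, x l • m l)) = 0 := by rw [hx]; simp
        rw [map_sum, map_sum] at this
        simp only [H.smul, co_act] at this
        simpa [Matrix.vecMul, dotProduct] using this
      ext l
      have := det_lemma _ _ _ ha _ hx2 l
      rw [← map_pow, ← map_mul] at this
      have := hi (this.trans (map_zero _).symm)
      rw [Fintype.card_fin] at this
      simp only [Pi.smul_apply, smul_eq_mul, Pi.zero_apply]
      rw [pow_succ, mul_right_comm, this, zero_mul]
    · intro x
      have := (hcm (c ^ r • x))
      rw [smul_smul, ← pow_succ'] at this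
      obtain ⟨y, hy⟩ := (Submodule.mem_span_range_iff_exists_fun C).mp this
      exact ⟨y, by rw [Fintype.linearCombination_apply, hy]⟩
  · intro e he hep₀ p hp hep
    obtain ⟨n, φ, m, hφ, hφe, hs⟩ := exists_dual (M := M) p
    obtain ⟨c, hc, hcm⟩ := span_lem p φ m hs
    have h1 := lower p hp m c hc hcm
    choose d hd using fun i => Ideal.Quotient.mk_surjective (φ₀ i e)
    have hde := hs₀ e d hd
    have : ∃ j, d j ∉ p₀ := by
      by_contra hcon
      push Not at hcon
      apply hep₀
      rw [← sub_add_cancel e (∑ i, d i • m₀ i)]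
      exact Submodule.add_mem _ hde (Submodule.sum_mem _ fun i _ =>
        Submodule.smul_mem_smul (hcon i) trivial)
    obtain ⟨j, hj⟩ := this
    obtain ⟨u, hu⟩ : ∃ u, 1 - u * d j ∈ p₀ := by
      obtain ⟨u, i, hi, h⟩ := Ideal.IsMaximal.exists_inv (I := p₀) inferInstance hj
      exact ⟨u, by rw [← h]; simpa using hi⟩
    let w : {i // i ≠ j} → M := fun i => m₀ i
    let N := Submodule.span C (Set.range w) ⊔ Submodule.span C {e}
    have hNm : ∀ i, i ≠ j → m₀ i ∈ N := fun i hi =>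
      Submodule.mem_sup_left (Submodule.subset_span ⟨⟨i, hi⟩, rfl⟩)
    have heN : e ∈ N := Submodule.mem_sup_right (Submodule.mem_span_singleton_self e)
    let N' := N ⊔ p₀ • (⊤ : Submodule C M)
    have hmj : ∀ i, m₀ i ∈ N' := by
      intro i
      by_cases hij : i = j
      · subst hij
        have h3 : d i • m₀ i ∈ N' := by
          have e1 : d i • m₀ i = e - ∑ l ∈ Finset.univ.erase i, d l • m₀ l
              - (e - ∑ l, d l • m₀ l) := by
            rw [← Finset.add_sum_erase Finset.univ (fun l => d l • m₀ l) (Finset.mem_univ i)]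
            abel
          rw [e1]
          refine Submodule.sub_mem _ (Submodule.sub_mem _ (Submodule.mem_sup_left heN)
            (Submodule.sum_mem _ fun l hl => Submodule.smul_mem _ _
              (Submodule.mem_sup_left (hNm l (Finset.ne_of_mem_erase hl))))) (Submodule.mem_sup_right hde)
        have e2 : m₀ i = u • d i • m₀ i + (1 - u * d i) • m₀ i := by
          rw [smul_smul, ← add_smul]; simp
        rw [e2]
        exact Submodule.add_mem _ (Submodule.smul_mem _ _ h3)
          (Submodule.mem_sup_right (Submodule.smul_mem_smul hu trivial))
      · exact Submodule.mem_sup_left (hNm i hij)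
    obtain ⟨c', hc', hcN⟩ := nak p₀ N (by
      intro x
      choose d' hd' using fun i => Ideal.Quotient.mk_surjective (φ₀ i x)
      rw [← sub_add_cancel x (∑ i, d' i • m₀ i)]
      exact Submodule.add_mem _ (Submodule.mem_sup_right (hs₀ x d' hd'))
        (Submodule.sum_mem _ fun i _ => Submodule.smul_mem _ _ (hmj i)))
    obtain ⟨a, ha⟩ := core H p φ m hφ w e c' he (hφe e hep) (by
      intro x
      obtain ⟨y, hy, z, hz, hyz⟩ := Submodule.mem_sup.mp (hcN x)
      obtain ⟨y', rfl⟩ := (Submodule.mem_span_range_iff_exists_fun C).mp hy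
      obtain ⟨z', rfl⟩ := Submodule.mem_span_singleton.mp hz
      exact ⟨y', z', hyz.symm⟩)
    have h4 := rank_lemma _ _ _ ha (hn p hp c' hc')
    simp only [Fintype.card_fin, ne_eq, Fintype.card_subtype_compl, Fintype.card_unique] at h4
    have := j.pos
    omega

end main

end TorsorAux

namespace TorsorAux

section hopf

variable {k A : Type*} [Field k] [CommRing A] [HopfAlgebra k A]

theorem map_val_inj (C : Subalgebra k A) :
    Function.Injective (Algebra.TensorProduct.map C.val C.val) :=
  TensorProduct.map_injective_of_flat_flat' C.val.toLinearMap C.val.toLinearMap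
    Subtype.val_injective Subtype.val_injective

theorem exists_delta (C : Subalgebra k A) (hC : C.IsHopfSub k) :
    ∃ δ₂ : C →ₐ[k] C ⊗[k] C, ∀ c : C,
      Algebra.TensorProduct.map C.val C.val (δ₂ c) = Coalgebra.comul (R := k) (c : A) := by
  let F := Algebra.TensorProduct.map C.val C.val
  let E := AlgEquiv.ofInjective F (map_val_inj C)
  let G : C →ₐ[k] F.range := ((Bialgebra.comulAlgHom k A).comp C.val).codRestrict F.range (by
    intro x
    obtain ⟨y, hy⟩ := hC.1 x x.2
    exact ⟨y, hy⟩)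
  refine ⟨E.symm.toAlgHom.comp G, fun c => ?_⟩
  have : E (E.symm (G c)) = G c := E.apply_symm_apply _
  exact congrArg Subtype.val this

theorem exists_sigma (C : Subalgebra k A) (hC : C.IsHopfSub k) :
    ∃ σ : C →ₐ[k] C, ∀ c : C, (σ c : A) = HopfAlgebra.antipode k (c : A) :=
  ⟨((HopfAlgebra.antipodeAlgHom k A).comp C.val).codRestrict C (fun x => hC.2 x x.2), fun _ => rfl⟩

/-- the augmentation ideal -/
noncomputable def aug (C : Subalgebra k A) : Ideal C :=
  RingHom.ker ((Bialgebra.counitAlgHom k A).comp C.val)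

theorem mem_aug (C : Subalgebra k A) (c : C) : c ∈ aug C ↔ Coalgebra.counit (R := k) (c : A) = 0 :=
  Iff.rfl

theorem aug_max (C : Subalgebra k A) : (aug C).IsMaximal := by
  apply RingHom.ker_isMaximal_of_surjective
  intro x
  exact ⟨algebraMap k C x, by simp⟩

theorem tau_inj_aux {C : Type*} [CommRing C] [Algebra k C] (f : C →ₐ[k] A)
    (hf : Function.Injective f) (p : Ideal C)
    (hp : ∀ c ∈ p, Bialgebra.counitAlgHom k A (f c) = 0)
    (δ : C →ₐ[k] C ⊗[k] A)
    (hδ : ∀ c, Algebra.TensorProduct.map f (AlgHom.id k A) (δ c) =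
      Coalgebra.comul (R := k) (f c)) : Function.Injective (tau δ p) := by
  let ε : (C ⧸ p) →ₐ[k] k := Ideal.Quotient.liftₐ p
    ((Bialgebra.counitAlgHom k A).comp f) (fun a ha => hp a ha)
  let Q : (C ⧸ p) ⊗[k] A →ₐ[k] A :=
    Algebra.TensorProduct.lift ((Algebra.ofId k A).comp ε) (AlgHom.id k A) (fun _ _ => Commute.all _ _)
  have h1 : ∀ y : C ⊗[k] A,
      Q (Algebra.TensorProduct.map (Ideal.Quotient.mkₐ k p) (AlgHom.id k A) y) =
      TensorProduct.lid k A ((Coalgebra.counit (R := k)).rTensor A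
        (Algebra.TensorProduct.map f (AlgHom.id k A) y)) := by
    intro y
    induction y with
    | zero => simp
    | add y z hy hz => simp only [map_add, hy, hz]
    | tmul c a =>
      simp [Q, Algebra.smul_def]
      rfl
  have h2 : ∀ c, Q (tau δ p c) = f c := by
    intro c
    rw [tau, AlgHom.comp_apply, h1, hδ, Coalgebra.rTensor_counit_comul]
    simp
  intro x y hxy
  apply hf
  rw [← h2 x, ← h2 y, hxy]

theorem tau_inj (C : Subalgebra k A) (δ : C →ₐ[k] C ⊗[k] A)
    (hδ : ∀ c, Algebra.TensorProduct.map C.val (AlgHom.id k A) (δ c) =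
      Coalgebra.comul (R := k) (c : A)) : Function.Injective (tau δ (aug C)) :=
  tau_inj_aux C.val Subtype.val_injective (aug C) (fun _ h => h) δ hδ

theorem tau_nil_aux {C : Type*} [CommRing C] [Algebra k C] (f : C →ₐ[k] A)
    (hf : Function.Injective f) (δ₂ : C →ₐ[k] C ⊗[k] C) (hδ₂ : ∀ c : C,
      Algebra.TensorProduct.map f f (δ₂ c) = Coalgebra.comul (R := k) (f c))
    (σ : C →ₐ[k] C) (hσ : ∀ c : C, f (σ c) = HopfAlgebra.antipode k (f c))
    (p : Ideal C) (hp : p.IsMaximal) (c : C) (hc : Coalgebra.counit (R := k) (f c) = 1) :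
    ¬ IsNilpotent (tau ((Algebra.TensorProduct.map (AlgHom.id k C) f).comp δ₂) p c) := by
  intro hnil
  let x := Algebra.TensorProduct.map (Ideal.Quotient.mkₐ k p) (AlgHom.id k C) (δ₂ c)
  let F : (C ⧸ p) ⊗[k] C →ₐ[k] (C ⧸ p) ⊗[k] A :=
    Algebra.TensorProduct.map (AlgHom.id k (C ⧸ p)) f
  have hF : Function.Injective F := Module.Flat.lTensor_preserves_injective_linearMap
    (M := C ⧸ p) f.toLinearMap hf
  have h1 : F x = tau ((Algebra.TensorProduct.map (AlgHom.id k C) f).comp δ₂) p c := by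
    simp only [F, x, tau, AlgHom.comp_apply]
    generalize δ₂ c = y
    induction y with
    | zero => simp
    | add y z hy hz => simp only [map_add, hy, hz]
    | tmul a b => simp
  rw [← h1, IsNilpotent.map_iff hF] at hnil
  let L : C ⊗[k] C →ₐ[k] C := Algebra.TensorProduct.lift (AlgHom.id k C) σ (fun _ _ => Commute.all _ _)
  let g : (C ⧸ p) ⊗[k] C →ₐ[k] (C ⧸ p) := Algebra.TensorProduct.lift (AlgHom.id k _)
    ((Ideal.Quotient.mkₐ k p).comp σ) (fun _ _ => Commute.all _ _)
  have h2 : g x = Ideal.Quotient.mkₐ k p (L (δ₂ c)) := by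
    simp only [g, x, L]
    generalize δ₂ c = y
    induction y with
    | zero => simp
    | add y z hy hz => simp only [map_add, hy, hz]
    | tmul a b => simp
  have h3 : ∀ y : C ⊗[k] C, f (L y) = LinearMap.mul' k A ((HopfAlgebra.antipode k).lTensor A
      (Algebra.TensorProduct.map f f y)) := by
    intro y
    induction y with
    | zero => simp
    | add y z hy hz => simp only [map_add, hy, hz]
    | tmul a b => simp [L, hσ]
  have h4 : L (δ₂ c) = 1 := by
    apply hf
    rw [h3, hδ₂, HopfAlgebra.mul_antipode_lTensor_comul_apply, hc]
    simp
  have h5 := hnil.map g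
  rw [h2, h4, map_one] at h5
  have : Nontrivial (C ⧸ p) := Ideal.Quotient.nontrivial_iff.mpr hp.ne_top
  exact not_isNilpotent_one h5

theorem tau_nil (C : Subalgebra k A) (δ₂ : C →ₐ[k] C ⊗[k] C) (hδ₂ : ∀ c : C,
      Algebra.TensorProduct.map C.val C.val (δ₂ c) = Coalgebra.comul (R := k) (c : A))
    (σ : C →ₐ[k] C) (hσ : ∀ c : C, (σ c : A) = HopfAlgebra.antipode k (c : A))
    (p : Ideal C) (hp : p.IsMaximal) (c : C) (hc : c - 1 ∈ aug C) :
    ¬ IsNilpotent (tau ((Algebra.TensorProduct.map (AlgHom.id k C) C.val).comp δ₂) p c) := by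
  refine tau_nil_aux C.val Subtype.val_injective δ₂ hδ₂ σ hσ p hp c ?_
  rw [mem_aug] at hc
  simpa [sub_eq_zero] using hc

section mods

variable (C : Subalgebra k A) (M : Submodule C A)

/-- the inclusion `M ⊗ A → A ⊗ A` -/
noncomputable def jj : M ⊗[k] A →ₗ[k] A ⊗[k] A := (M.subtype.restrictScalars k).rTensor A

theorem jj_inj : Function.Injective (jj C M) :=
  Module.Flat.rTensor_preserves_injective_linearMap (M := A) (M.subtype.restrictScalars k)
    Subtype.val_injective

theorem jj_act (y : C ⊗[k] A) (x : M ⊗[k] A) : jj C M (act k C A M y x) =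
    Algebra.TensorProduct.map C.val (AlgHom.id k A) y * jj C M x := by
  induction y with
  | zero => simp
  | add y z hy hz => simp only [map_add, LinearMap.add_apply, hy, hz, add_mul]
  | tmul c a =>
    induction x with
    | zero => simp
    | add y z hy hz => simp only [map_add, hy, hz, mul_add]
    | tmul m b =>
      simp [jj, act, Algebra.smul_def]

theorem exists_rho (hM : ∀ m ∈ M, Coalgebra.comul (R := k) m ∈ LinearMap.range (jj C M)) :
    ∃ ρ : M →ₗ[k] M ⊗[k] A, ∀ m : M, jj C M (ρ m) = Coalgebra.comul (R := k) (m : A) := by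
  let E := LinearEquiv.ofInjective (jj C M) (jj_inj C M)
  let G : M →ₗ[k] LinearMap.range (jj C M) := ((Coalgebra.comul (R := k)).comp
    (M.subtype.restrictScalars k)).codRestrict _ (fun x => hM x x.2)
  refine ⟨E.symm.toLinearMap.comp G, fun c => ?_⟩
  have : E (E.symm (G c)) = G c := E.apply_symm_apply _
  exact congrArg Subtype.val this

/-- `m ⊗ a ↦ ρ m * a` -/
noncomputable def gam {M : Type*} [AddCommGroup M] [Module k M] (ρ : M →ₗ[k] M ⊗[k] A) :
    M ⊗[k] A →ₗ[k] M ⊗[k] A :=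
  ((LinearMap.mul' k A).lTensor M).comp
    ((TensorProduct.assoc k M A A).toLinearMap.comp (ρ.rTensor A))

theorem gam_tmul {M : Type*} [AddCommGroup M] [Module k M] (ρ : M →ₗ[k] M ⊗[k] A) (m : M) (a : A) :
    gam ρ (m ⊗ₜ a) = (LinearMap.mulRight k a).lTensor M (ρ m) := by
  simp only [gam, LinearMap.comp_apply, LinearMap.rTensor_tmul]
  generalize ρ m = y
  induction y with
  | zero => simp
  | add y z hy hz => simp only [map_add, TensorProduct.add_tmul, hy, hz]
  | tmul c a => simp

theorem gam_antipode (a : A) : gam (Coalgebra.comul (R := k) (A := A))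
    ((HopfAlgebra.antipode k).lTensor A (Coalgebra.comul a)) = a ⊗ₜ[k] (1 : A) := by
  have h1 : ∀ y : A ⊗[k] A, gam (Coalgebra.comul (R := k) (A := A))
      ((HopfAlgebra.antipode k).lTensor A y) =
      ((LinearMap.mul' k A).comp ((HopfAlgebra.antipode k).lTensor A)).lTensor A
        (TensorProduct.assoc k A A A ((Coalgebra.comul (R := k)).rTensor A y)) := by
    intro y
    induction y with
    | zero => simp
    | add y z hy hz => simp only [map_add, hy, hz]
    | tmul x b =>
      rw [LinearMap.lTensor_tmul, gam_tmul, LinearMap.rTensor_tmul]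
      generalize (Coalgebra.comul (R := k) x) = y
      induction y with
      | zero => simp
      | add y z hy hz => simp only [map_add, TensorProduct.add_tmul, hy, hz]
      | tmul c a => simp
  rw [h1, Coalgebra.coassoc_apply, ← LinearMap.comp_apply, ← LinearMap.lTensor_comp,
    LinearMap.comp_assoc, HopfAlgebra.mul_antipode_lTensor_comul, LinearMap.lTensor_comp,
    LinearMap.comp_apply, Coalgebra.lTensor_counit_comul]
  simp

theorem isHM (δ : C →ₐ[k] C ⊗[k] A)
    (hδ : ∀ c, Algebra.TensorProduct.map C.val (AlgHom.id k A) (δ c) =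
      Coalgebra.comul (R := k) (c : A))
    (ρ : M →ₗ[k] M ⊗[k] A) (hρ : ∀ m : M, jj C M (ρ m) = Coalgebra.comul (R := k) (m : A)) :
    IsHM δ ρ where
  smul c m := by
    apply jj_inj C M
    rw [jj_act, hρ, hδ, hρ, ← Bialgebra.comul_mul]
    rfl
  gal m := by
    have h1 : ∀ t, gam ρ t ∈ Submodule.span k
        {x | ∃ m' a, x = (LinearMap.mulRight k a).lTensor M (ρ m')} := by
      intro t
      induction t with
      | zero => simp
      | add y z hy hz => rw [map_add]; exact Submodule.add_mem _ hy hz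
      | tmul m a => exact Submodule.subset_span ⟨m, a, gam_tmul ρ m a⟩
    have h2 : ∀ t, jj C M (gam ρ t) = gam (Coalgebra.comul (R := k) (A := A)) (jj C M t) := by
      intro t
      induction t with
      | zero => simp
      | add y z hy hz => simp only [map_add, hy, hz]
      | tmul m a =>
        have : jj C M (m ⊗ₜ a) = (m : A) ⊗ₜ[k] a := rfl
        rw [this, gam_tmul, gam_tmul, ← hρ]
        exact LinearMap.congr_fun (LinearMap.rTensor_comp_lTensor (M := M) (P := A) (Q := A) _ _ |>.trans
          (LinearMap.lTensor_comp_rTensor (M := M) (P := A) (Q := A) _ _).symm) (ρ m)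
    have h3 : gam ρ ((HopfAlgebra.antipode k).lTensor M (ρ m)) = m ⊗ₜ (1 : A) := by
      apply jj_inj C M
      rw [h2]
      have : jj C M ((HopfAlgebra.antipode k).lTensor M (ρ m)) =
          (HopfAlgebra.antipode k).lTensor A (jj C M (ρ m)) :=
        LinearMap.congr_fun (LinearMap.rTensor_comp_lTensor (M := M) (P := A) (Q := A) _ _ |>.trans
          (LinearMap.lTensor_comp_rTensor (M := M) (P := A) (Q := A) _ _).symm) (ρ m)
      rw [this, hρ, gam_antipode]
      rfl
    rw [← h3]
    exact h1 _

theorem exists_M (δ : C →ₐ[k] C ⊗[k] A)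
    (hδ : ∀ c, Algebra.TensorProduct.map C.val (AlgHom.id k A) (δ c) =
      Coalgebra.comul (R := k) (c : A)) (s : Finset A) :
    ∃ M : Submodule C A, M.FG ∧ (∀ a ∈ s, a ∈ M) ∧
      ∀ m ∈ M, Coalgebra.comul (R := k) m ∈ LinearMap.range (jj C M) := by
  classical
  let b := Module.Basis.ofVectorSpace k A
  let cf : A → _ →₀ A := fun v => TensorProduct.equivFinsuppOfBasisRight (M := A) b (Coalgebra.comul v)
  let T : Finset A := s.biUnion fun v => (cf v).support.image (cf v)
  let M : Submodule C A := Submodule.span C (T : Set A)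
  have hcf : ∀ v ∈ s, ∀ i, cf v i ∈ M := by
    intro v hv i
    by_cases h0 : cf v i = 0
    · rw [h0]; exact M.zero_mem
    · apply Submodule.subset_span
      exact Finset.mem_coe.mpr (Finset.mem_biUnion.mpr ⟨v, hv,
        Finset.mem_image.mpr ⟨i, Finsupp.mem_support_iff.mpr h0, rfl⟩⟩)
  have hexp : ∀ v, Coalgebra.comul (R := k) v = ∑ i ∈ (cf v).support, cf v i ⊗ₜ[k] b i := by
    intro v
    have := (TensorProduct.equivFinsuppOfBasisRight (M := A) b).symm_apply_apply
      (Coalgebra.comul (R := k) v)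
    rw [TensorProduct.equivFinsuppOfBasisRight_symm_apply] at this
    exact this.symm
  have hrange : ∀ v ∈ s, Coalgebra.comul (R := k) v ∈ LinearMap.range (jj C M) := by
    intro v hv
    rw [hexp]
    exact Submodule.sum_mem _ fun i _ => ⟨(⟨cf v i, hcf v hv i⟩ : M) ⊗ₜ b i, rfl⟩
  refine ⟨M, ⟨T, rfl⟩, ?_, ?_⟩
  · intro v hv
    have h1 := Coalgebra.lTensor_counit_comul (R := k) v
    rw [hexp, map_sum] at h1
    have h2 := congrArg (TensorProduct.rid k A) h1
    simp only [map_sum, LinearMap.lTensor_tmul, TensorProduct.rid_tmul, one_smul] at h2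
    rw [← h2]
    refine Submodule.sum_mem _ fun i _ => ?_
    rw [← algebraMap_smul C]
    exact M.smul_mem _ (hcf v hv i)
  · intro m hm
    induction hm using Submodule.span_induction with
    | zero => rw [map_zero]; exact Submodule.zero_mem _
    | add x y _ _ hx hy => rw [map_add]; exact Submodule.add_mem _ hx hy
    | smul c x _ hx =>
      obtain ⟨y, hy⟩ := hx
      refine ⟨act k C A M (δ c) y, ?_⟩
      rw [jj_act, hδ, hy, ← Bialgebra.comul_mul]
      rfl
    | mem x hx =>
      obtain ⟨v, hv, hx⟩ := Finset.mem_biUnion.mp (Finset.mem_coe.mp hx)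
      obtain ⟨i, -, rfl⟩ := Finset.mem_image.mp hx
      let h : A →ₗ[k] A := (TensorProduct.rid k A).toLinearMap.comp
        (((b.coord i).lTensor A).comp (Coalgebra.comul (R := k)))
      have h1 : Coalgebra.comul (R := k) (cf v i) = h.lTensor A (Coalgebra.comul (R := k) v) := by
        have e1 : ∀ y : A ⊗[k] A, Coalgebra.comul (R := k)
            (TensorProduct.rid k A ((b.coord i).lTensor A y)) =
            ((TensorProduct.rid k A).toLinearMap.comp ((b.coord i).lTensor A)).lTensor A
              (TensorProduct.assoc k A A A ((Coalgebra.comul (R := k)).rTensor A y)) := by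
          intro y
          induction y with
          | zero => simp
          | add y z hy hz => simp only [map_add, hy, hz]
          | tmul x a =>
            simp only [LinearMap.lTensor_tmul, TensorProduct.rid_tmul, map_smul, LinearMap.rTensor_tmul]
            generalize (Coalgebra.comul (R := k) x) = y
            induction y with
            | zero => simp
            | add y z hy hz => simp only [map_add, TensorProduct.add_tmul, hy, hz, smul_add]
            | tmul c d => simp
        have e2 : cf v i = TensorProduct.rid k A ((b.coord i).lTensor A (Coalgebra.comul v)) :=
          TensorProduct.equivFinsuppOfBasisRight_apply _ _ _
        rw [e2, e1, Coalgebra.coassoc_apply, ← LinearMap.comp_apply, ← LinearMap.lTensor_comp,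
          LinearMap.comp_assoc]
      obtain ⟨y, hy⟩ := hrange v hv
      refine ⟨h.lTensor M y, ?_⟩
      rw [h1, ← hy]
      exact LinearMap.congr_fun (LinearMap.rTensor_comp_lTensor (M := M) (P := A) (Q := A) _ _ |>.trans
          (LinearMap.lTensor_comp_rTensor (M := M) (P := A) (Q := A) _ _).symm) y

end mods

theorem hopf_ff (C : Subalgebra k A) (hC : C.IsHopfSub k) : Module.FaithfullyFlat C A := by
  classical
  obtain ⟨δ₂, hδ₂⟩ := exists_delta C hC
  obtain ⟨σ, hσ⟩ := exists_sigma C hC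
  let δ : C →ₐ[k] C ⊗[k] A := (Algebra.TensorProduct.map (AlgHom.id k C) C.val).comp δ₂
  have hδ : ∀ c, Algebra.TensorProduct.map C.val (AlgHom.id k A) (δ c) =
      Coalgebra.comul (R := k) (c : A) := by
    intro c
    rw [← hδ₂]
    simp only [δ, AlgHom.comp_apply]
    generalize δ₂ c = y
    induction y with
    | zero => simp
    | add y z hy hz => simp only [map_add, hy, hz]
    | tmul a b => simp
  have := aug_max C
  have hi := tau_inj C δ hδ
  have hn := tau_nil C δ₂ hδ₂ σ hσ
  have hflat : Module.Flat C A := by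
    apply Module.Flat.of_forall_isTrivialRelation
    intro l f x hfx
    obtain ⟨M, hM, hsM, hco⟩ := exists_M C δ hδ (Finset.univ.image x)
    obtain ⟨ρ, hρ⟩ := exists_rho C M hco
    have : Module.Finite C M := Module.Finite.iff_fg.mpr hM
    have hfl := (main (isHM C M δ hδ ρ hρ) (aug C) hi hn).1
    let x' : Fin l → M := fun i => ⟨x i, hsM _ (by simp)⟩
    obtain ⟨κ, a, y, h1, h2⟩ := Module.Flat.isTrivialRelation_of_sum_smul_eq_zero (f := f) (x := x')
      (by apply Subtype.ext; simpa [x'] using hfx)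
    refine ⟨κ, a, fun j => y j, fun i => ?_, h2⟩
    have := congrArg Subtype.val (h1 i)
    simpa [x'] using this
  refine { hflat with submodule_ne_top := ?_ }
  intro p hp htop
  have h1 : (1 : A) ∈ p • (⊤ : Submodule C A) := by rw [htop]; trivial
  obtain ⟨s, hs⟩ : ∃ s : Finset A, ∀ M : Submodule C A, (∀ a ∈ s, a ∈ M) → (1 : A) ∈ p • M := by
    generalize (1 : A) = z at h1
    induction h1 using Submodule.smul_induction_on' with
    | smul r hr n _ => exact ⟨{n}, fun M hM => Submodule.smul_mem_smul hr (hM n (by simp))⟩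
    | add x _ y _ hx hy =>
      obtain ⟨s, hs⟩ := hx
      obtain ⟨t, ht⟩ := hy
      exact ⟨s ∪ t, fun M hM => Submodule.add_mem _ (hs M fun a ha => hM a (by simp [ha]))
        (ht M fun a ha => hM a (by simp [ha]))⟩
  obtain ⟨M, hM, hsM, hco⟩ := exists_M C δ hδ (insert 1 s)
  obtain ⟨ρ, hρ⟩ := exists_rho C M hco
  have : Module.Finite C M := Module.Finite.iff_fg.mpr hM
  let e : M := ⟨1, hsM 1 (by simp)⟩
  refine (main (isHM C M δ hδ ρ hρ) (aug C) hi hn).2 e ?_ ?_ p hp ?_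
  · apply jj_inj C M
    rw [hρ]
    exact Bialgebra.comul_one
  · intro he
    have : ∀ x ∈ aug C • (⊤ : Submodule C M), Coalgebra.counit (R := k) (x : A) = 0 := by
      intro x hx
      induction hx using Submodule.smul_induction_on' with
      | smul r hr n _ =>
        have : ((r • n : M) : A) = (r : A) * n := rfl
        rw [this, Bialgebra.counit_mul, (mem_aug C r).mp hr, zero_mul]
      | add x _ y _ hx hy => rw [Submodule.coe_add, map_add, hx, hy, add_zero]
    have := this e he
    simp [e] at this
  · have h2 := hs M (fun a ha => hsM a (by simp [ha]))
    have h3 : (p • (⊤ : Submodule C M)).map M.subtype = p • M := by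
      rw [Submodule.map_smul'', Submodule.map_top, Submodule.range_subtype]
    rw [← h3] at h2
    obtain ⟨z, hz, hz1⟩ := h2
    have : z = e := Subtype.ext hz1
    rwa [← this]

end hopf

end TorsorAux

namespace TorsorAux

section ff

theorem ff_comp {R S T : Type*} [CommRing R] [CommRing S] [CommRing T] {f : R →+* S} {g : S →+* T}
    (hf : f.FaithfullyFlat) (hg : g.FaithfullyFlat) : (g.comp f).FaithfullyFlat := by
  algebraize [f, g, g.comp f]
  rw [← RingHom.algebraMap_toAlgebra (g.comp f), RingHom.faithfullyFlat_algebraMap_iff]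
  exact .trans R S T

theorem ff_tower_flat (R S T : Type*) [CommRing R] [CommRing S] [CommRing T] [Algebra R S]
    [Algebra S T] [Algebra R T] [IsScalarTower R S T] [Module.Flat R T]
    [Module.FaithfullyFlat S T] : Module.Flat R S := by
  rw [Module.Flat.iff_lTensor_preserves_injective_linearMap]
  intro N N' _ _ _ _ f hf
  have h1 : Function.Injective (f.lTensor T) := Module.Flat.lTensor_preserves_injective_linearMap f hf
  let g : S ⊗[R] N →ₗ[S] S ⊗[R] N' := f.baseChange S
  have h2 : Function.Injective (g.lTensor T) := by
    intro x y hxy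
    apply (TensorProduct.AlgebraTensorModule.cancelBaseChange R S S T N).injective
    apply h1
    have key : ∀ x, f.lTensor T (TensorProduct.AlgebraTensorModule.cancelBaseChange R S S T N x) =
        TensorProduct.AlgebraTensorModule.cancelBaseChange R S S T N' (g.lTensor T x) := by
      intro x
      exact DFunLike.congr_fun (TensorProduct.AlgebraTensorModule.lTensor_comp_cancelBaseChange
        (R := R) (A := S) (B := S) (M := T) f) x
    rw [key, key, hxy]
  have h3 : Function.Injective g := (Module.FaithfullyFlat.lTensor_injective_iff_injective S T g).1 h2
  exact h3

theorem ff_tower {R S T : Type*} [CommRing R] [CommRing S] [CommRing T] (f : R →+* S) (g : S →+* T)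
    (hgf : (g.comp f).FaithfullyFlat) (hg : g.FaithfullyFlat) : f.FaithfullyFlat := by
  rw [RingHom.FaithfullyFlat.iff_flat_and_comap_surjective]
  constructor
  · have h := hgf.flat
    algebraize [f, g, g.comp f]
    exact ff_tower_flat R S T
  · have h := (RingHom.FaithfullyFlat.iff_flat_and_comap_surjective.1 hgf).2
    rw [PrimeSpectrum.comap_comp] at h
    exact h.of_comp

attribute [local instance] Algebra.TensorProduct.rightAlgebra in
theorem ff_lTensor {R : Type*} (A : Type*) {B D : Type*} [CommRing R] [CommRing A] [Algebra R A]
    [CommRing B] [Algebra R B] [CommRing D] [Algebra R D] (f : B →ₐ[R] D)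
    (hf : f.toRingHom.FaithfullyFlat) :
    (Algebra.TensorProduct.map (AlgHom.id R A) f).toRingHom.FaithfullyFlat := by
  algebraize [f.toRingHom, (Algebra.TensorProduct.lTensor (S := A) A f).toRingHom]
  let e : A ⊗[R] D ≃ₐ[A ⊗[R] B] (A ⊗[R] B) ⊗[B] D :=
    { __ := (Algebra.IsPushout.cancelBaseChangeAlg _ _ _ _ _).symm,
      commutes' x := DFunLike.congr_fun (Algebra.IsPushout.cancelBaseChange_symm_comp_lTensor R B D A) x }
  exact .of_linearEquiv _ _ e.toLinearEquiv

theorem ff_includeRight {k B D : Type*} [Field k] [CommRing B] [Algebra k B] [Nontrivial B]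
    [CommRing D] [Algebra k D] :
    (Algebra.TensorProduct.includeRight : D →ₐ[k] B ⊗[k] D).toRingHom.FaithfullyFlat := by
  have h1 : (algebraMap D (D ⊗[k] B)).FaithfullyFlat :=
    RingHom.faithfullyFlat_algebraMap_iff.2 inferInstance
  have h2 : (Algebra.TensorProduct.comm k D B).toAlgHom.toRingHom.FaithfullyFlat :=
    .of_bijective (Algebra.TensorProduct.comm k D B).bijective
  have := ff_comp h1 h2
  convert this using 1
  ext x
  simp

/-- The abstract descent step. -/
theorem descent {k A B C D : Type*} [Field k] [CommRing A] [Algebra k A] [CommRing B] [Algebra k B]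
    [CommRing C] [Algebra k C] [CommRing D] [Algebra k D] [Nontrivial B]
    (G : B ⊗[k] B →ₐ[k] B ⊗[k] A) (hG : Function.Bijective G)
    (hGl : ∀ b : B, G (b ⊗ₜ 1) = b ⊗ₜ 1)
    (ι : D →ₐ[k] B) (hι : Function.Injective ι) (g : C →ₐ[k] A) (hg : Function.Injective g)
    (hr : (G.comp (Algebra.TensorProduct.map (AlgHom.id k B) ι)).range =
      (Algebra.TensorProduct.map (AlgHom.id k B) g).range)
    (hff : g.toRingHom.FaithfullyFlat) (hft : Algebra.FiniteType k C) :
    ι.toRingHom.FaithfullyFlat ∧ Algebra.FiniteType k D := by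
  have i1 : Function.Injective (G.comp (Algebra.TensorProduct.map (AlgHom.id k B) ι)) :=
    hG.1.comp (Module.Flat.lTensor_preserves_injective_linearMap (M := B) ι.toLinearMap hι)
  have i2 : Function.Injective (Algebra.TensorProduct.map (AlgHom.id k B) g) :=
    Module.Flat.lTensor_preserves_injective_linearMap (M := B) g.toLinearMap hg
  let e : B ⊗[k] D ≃ₐ[k] B ⊗[k] C := ((AlgEquiv.ofInjective _ i1).trans
    (Subalgebra.equivOfEq _ _ hr)).trans (AlgEquiv.ofInjective _ i2).symm
  have he : ∀ x, Algebra.TensorProduct.map (AlgHom.id k B) g (e x) =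
      G (Algebra.TensorProduct.map (AlgHom.id k B) ι x) := by
    intro x
    have := (AlgEquiv.ofInjective _ i2).apply_symm_apply
      (Subalgebra.equivOfEq _ _ hr (AlgEquiv.ofInjective _ i1 x))
    exact congrArg Subtype.val this
  constructor
  · have h1 := ff_lTensor B g hff
    have he' : e.toAlgHom.toRingHom.FaithfullyFlat := .of_bijective e.bijective
    have h2 := ff_comp he' h1
    have hG' : (AlgEquiv.ofBijective G hG).symm.toAlgHom.toRingHom.FaithfullyFlat :=
      .of_bijective (AlgEquiv.ofBijective G hG).symm.bijective
    have h3 := ff_comp h2 hG'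
    have h4 := ff_comp
      (ff_includeRight (k := k) (B := B) (D := D)) h3
    refine ff_tower _ (Algebra.TensorProduct.includeRight : B →ₐ[k] B ⊗[k] B).toRingHom ?_
      ff_includeRight
    convert h4 using 1
    ext d
    change (1 : B) ⊗ₜ[k] ι d = (AlgEquiv.ofBijective G hG).symm
      (Algebra.TensorProduct.map (AlgHom.id k B) g (e (1 ⊗ₜ d)))
    rw [he, AlgEquiv.eq_symm_apply]
    simp
  · have hB : (algebraMap B (B ⊗[k] C)).FiniteType :=
      RingHom.finiteType_algebraMap.2 inferInstance
    have h2 : (e.symm.toAlgHom.toRingHom.comp (algebraMap B (B ⊗[k] C))).FiniteType :=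
      hB.comp_surjective e.symm.surjective
    have h3 : e.symm.toAlgHom.toRingHom.comp (algebraMap B (B ⊗[k] C)) =
        algebraMap B (B ⊗[k] D) := by
      ext b
      change e.symm (b ⊗ₜ 1) = b ⊗ₜ 1
      rw [AlgEquiv.symm_apply_eq]
      apply i2
      rw [he]
      simp [hGl]
    rw [h3] at h2
    have : Algebra.FiniteType B (B ⊗[k] D) := RingHom.finiteType_algebraMap.1 h2
    exact Algebra.FiniteType.of_finiteType_tensorProduct_of_faithfullyFlat (R := k) B

end ff

section gal

variable {k A B : Type*} [Field k] [CommRing A] [HopfAlgebra k A] [CommRing B] [Algebra k B]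

/-- The subalgebra of elements whose coaction lands in `B ⊗ C`. -/
noncomputable def sub (ρ : B →ₐ[k] B ⊗[k] A) (C : Subalgebra k A) : Subalgebra k B :=
  (Algebra.TensorProduct.map (AlgHom.id k B) C.val).range.comap ρ

theorem mem_sub (ρ : B →ₐ[k] B ⊗[k] A) (C : Subalgebra k A) (b : B) :
    b ∈ sub ρ C ↔ ∃ z, Algebra.TensorProduct.map (AlgHom.id k B) C.val z = ρ b := Iff.rfl

/-- The Galois map. -/
noncomputable abbrev gal (ρ : B →ₐ[k] B ⊗[k] A) : B ⊗[k] B →ₐ[k] B ⊗[k] A :=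
  Algebra.TensorProduct.lift (Algebra.TensorProduct.includeLeft : B →ₐ[k] B ⊗[k] A) ρ
      (fun _ _ => Commute.all _ _)

theorem sub_exact (ρ : B →ₐ[k] B ⊗[k] A) (C : Subalgebra k A) :
    Function.Exact (sub ρ C).val.toLinearMap
      ((C.toSubmodule.mkQ.lTensor B) ∘ₗ ρ.toLinearMap) := by
  have h : Function.Exact (C.toSubmodule.subtype.lTensor B) (C.toSubmodule.mkQ.lTensor B) :=
    Module.Flat.lTensor_exact B (LinearMap.exact_subtype_mkQ _)
  intro b
  rw [LinearMap.comp_apply, h]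
  constructor
  · rintro ⟨z, hz⟩
    exact ⟨⟨b, z, hz⟩, rfl⟩
  · rintro ⟨⟨b', z, hz⟩, rfl⟩
    exact ⟨z, hz⟩

theorem gal_comod (ρ : B →ₐ[k] B ⊗[k] A) (coassoc : ∀ b : B,
    (TensorProduct.assoc k B A A) ((TensorProduct.map ρ.toLinearMap LinearMap.id) (ρ b)) =
      (TensorProduct.map LinearMap.id (Coalgebra.comul (R := k))) (ρ b))
    {Q : Type*} [AddCommGroup Q] [Module k Q] (q : A →ₗ[k] Q) (y : B ⊗[k] B) :
    TensorProduct.assoc k B A Q ((gal ρ).toLinearMap.rTensor Q ((TensorProduct.assoc k B B Q).symm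
      (((q.lTensor B) ∘ₗ ρ.toLinearMap).lTensor B y))) =
    ((q.lTensor A) ∘ₗ Coalgebra.comul (R := k)).lTensor B (gal ρ y) := by
  induction y with
  | zero => simp
  | add x y hx hy => simp only [map_add, hx, hy]
  | tmul b b' =>
    have e1 : ∀ w : B ⊗[k] A, ((q.lTensor A) ∘ₗ Coalgebra.comul (R := k)).lTensor B ((b ⊗ₜ 1) * w) =
        (LinearMap.mulLeft k b).rTensor (A ⊗[k] Q) ((q.lTensor A).lTensor B
          (TensorProduct.map LinearMap.id (Coalgebra.comul (R := k)) w)) := by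
      intro w
      induction w with
      | zero => simp
      | add x y hx hy => simp only [map_add, mul_add, hx, hy]
      | tmul u a => simp
    have e2 : ∀ w : B ⊗[k] A, TensorProduct.assoc k B A Q ((gal ρ).toLinearMap.rTensor Q
        ((TensorProduct.assoc k B B Q).symm (b ⊗ₜ (q.lTensor B w)))) =
        (LinearMap.mulLeft k b).rTensor (A ⊗[k] Q) ((q.lTensor A).lTensor B
          (TensorProduct.assoc k B A A ((TensorProduct.map ρ.toLinearMap LinearMap.id) w))) := by
      intro w
      induction w with
      | zero => simp
      | add x y hx hy => simp only [map_add, TensorProduct.tmul_add, hx, hy]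
      | tmul u a =>
        simp only [LinearMap.lTensor_tmul, TensorProduct.assoc_symm_tmul, LinearMap.rTensor_tmul,
          TensorProduct.map_tmul, AlgHom.toLinearMap_apply, LinearMap.id_apply,
          Algebra.TensorProduct.lift_tmul, Algebra.TensorProduct.includeLeft_apply]
        generalize ρ u = v
        induction v with
        | zero => simp
        | add x y hx hy => simp only [map_add, mul_add, TensorProduct.add_tmul, hx, hy]
        | tmul u a => simp
    have e3 : gal ρ (b ⊗ₜ b') = (b ⊗ₜ 1) * ρ b' := by simp
    rw [e3, e1, ← coassoc, ← e2]
    simp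

theorem gal_range (ρ : B →ₐ[k] B ⊗[k] A) (hρ : IsTorsorAlgebra k A B ρ) (C : Subalgebra k A)
    (hC : C.IsHopfSub k) :
    ((gal ρ).comp (Algebra.TensorProduct.map (AlgHom.id k B) (sub ρ C).val)).range =
      (Algebra.TensorProduct.map (AlgHom.id k B) C.val).range := by
  apply le_antisymm
  · rintro _ ⟨z, rfl⟩
    induction z with
    | zero => exact ⟨0, by simp⟩
    | add x y hx hy =>
      rw [map_add]
      exact add_mem hx hy
    | tmul b d =>
      obtain ⟨d, z, hz⟩ := d
      refine ⟨(b ⊗ₜ 1) * z, ?_⟩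
      have hz' : Algebra.TensorProduct.map (AlgHom.id k B) C.val z = ρ d := hz
      change Algebra.TensorProduct.map (AlgHom.id k B) C.val ((b ⊗ₜ 1) * z) = gal ρ (b ⊗ₜ d)
      rw [map_mul, hz']
      simp
  · rintro _ ⟨z, rfl⟩
    obtain ⟨y, hy⟩ := hρ.galois_bijective.2 (Algebra.TensorProduct.map (AlgHom.id k B) C.val z)
    have hcomod := gal_comod ρ hρ.coassoc C.toSubmodule.mkQ y
    have hz0 : ∀ z : B ⊗[k] C, (((C.toSubmodule.mkQ).lTensor A) ∘ₗ
        Coalgebra.comul (R := k)).lTensor B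
        (Algebra.TensorProduct.map (AlgHom.id k B) C.val z) = 0 := by
      intro z
      induction z with
      | zero => simp
      | add x y hx hy => simp only [map_add, hx, hy, add_zero]
      | tmul b c =>
        have hc : ((C.toSubmodule.mkQ).lTensor A) (Coalgebra.comul (R := k) (c : A)) = 0 := by
          obtain ⟨t, ht⟩ := hC.1 c c.2
          rw [← ht]
          clear ht
          induction t with
          | zero => simp
          | add x y hx hy => simp only [map_add, hx, hy, add_zero]
          | tmul a a' =>
            have : C.toSubmodule.mkQ (a' : A) = 0 := by
              rw [Submodule.mkQ_apply, Submodule.Quotient.mk_eq_zero]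
              exact a'.2
            simp only [TensorProduct.map_tmul, LinearMap.lTensor_tmul, AlgHom.toLinearMap_apply,
              Subalgebra.coe_val, this, TensorProduct.tmul_zero]
        simp only [Algebra.TensorProduct.map_tmul, LinearMap.lTensor_tmul, LinearMap.comp_apply,
          Subalgebra.coe_val, hc, TensorProduct.tmul_zero]
    have hy' : gal ρ y = Algebra.TensorProduct.map (AlgHom.id k B) C.val z := hy
    rw [hy', hz0, LinearEquiv.map_eq_zero_iff] at hcomod
    have hinj : Function.Injective ((gal ρ).toLinearMap.rTensor (A ⧸ C.toSubmodule)) :=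
      Module.Flat.rTensor_preserves_injective_linearMap _ hρ.galois_bijective.1
    rw [← map_zero ((gal ρ).toLinearMap.rTensor (A ⧸ C.toSubmodule))] at hcomod
    have h0 := hinj hcomod
    rw [LinearEquiv.map_eq_zero_iff] at h0
    have hex := Module.Flat.lTensor_exact B (sub_exact ρ C)
    obtain ⟨w, hw⟩ := (hex y).1 h0
    refine ⟨w, ?_⟩
    have hw' : Algebra.TensorProduct.map (AlgHom.id k B) (sub ρ C).val w = y := hw
    change gal ρ (Algebra.TensorProduct.map (AlgHom.id k B) (sub ρ C).val w) = _
    rw [hw', hy']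
    rfl

theorem sub_main (ρ : B →ₐ[k] B ⊗[k] A) (hρ : IsTorsorAlgebra k A B ρ) (C : Subalgebra k A)
    (hC : C.IsHopfSub k) (hfg : C.FG) :
    (sub ρ C).val.toRingHom.FaithfullyFlat ∧ Algebra.FiniteType k (sub ρ C) := by
  have := hρ.nontrivial
  refine descent (gal ρ) hρ.galois_bijective (by simp) (sub ρ C).val Subtype.val_injective C.val
    Subtype.val_injective (gal_range ρ hρ C hC) ?_ (C.fg_iff_finiteType.1 hfg)
  exact RingHom.faithfullyFlat_algebraMap_iff.2 (hopf_ff C hC)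

theorem sub_mono (ρ : B →ₐ[k] B ⊗[k] A) {C D : Subalgebra k A} (h : C ≤ D) : sub ρ C ≤ sub ρ D := by
  rintro b ⟨z, hz⟩
  refine ⟨Algebra.TensorProduct.map (AlgHom.id k B) (Subalgebra.inclusion h) z, ?_⟩
  refine Eq.trans ?_ hz
  clear hz
  induction z with
  | zero => simp
  | add x y hx hy =>
    simp only [map_add, hx, hy]
  | tmul b c => rfl

end gal

end TorsorAux

/-- A torsor algebra `B` under a commutative Hopf algebra `A` over a field `k` which is the
directed union of finitely generated sub-Hopf-algebras `Aᵢ`, `i ∈ I`, is the directed union of a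
monotone family of nonzero finitely generated `k`-subalgebras `B_ω`, indexed by a directed poset
`Ω` of the same cardinality as `I`, with all inclusions `B_ω₁ ⊆ B_ω₂` (for `ω₁ ≤ ω₂`)
faithfully flat. -/
theorem torsor_algebra_directed_union {k : Type} [Field k]
    {A : Type} [CommRing A] [HopfAlgebra k A]
    {I : Type} [PartialOrder I] [Nonempty I] [IsDirected I (· ≤ ·)]
    (𝒜 : I → Subalgebra k A) (hmono : Monotone 𝒜)
    (hfg : ∀ i, (𝒜 i).FG) (hhopf : ∀ i, (𝒜 i).IsHopfSub k)
    (hunion : ∀ a : A, ∃ i, a ∈ 𝒜 i)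
    {B : Type} [CommRing B] [Algebra k B]
    (ρ : B →ₐ[k] B ⊗[k] A) (hρ : IsTorsorAlgebra k A B ρ) :
    ∃ (Ω : Type) (_ : PartialOrder Ω) (_ : Nonempty Ω) (_ : IsDirected Ω (· ≤ ·)),
      Cardinal.mk Ω = Cardinal.mk I ∧
      ∃ (ℬ : Ω → Subalgebra k B) (hm : Monotone ℬ),
        (∀ ω, (ℬ ω).FG) ∧
        (∀ ω, Nontrivial (ℬ ω)) ∧
        (∀ b : B, ∃ ω, b ∈ ℬ ω) ∧
        (∀ ω₁ ω₂ : Ω, ∀ h : ω₁ ≤ ω₂,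
          letI : Algebra (ℬ ω₁) (ℬ ω₂) := (Subalgebra.inclusion (hm h)).toRingHom.toAlgebra
          Module.FaithfullyFlat (ℬ ω₁) (ℬ ω₂)) := by
  have hnt := hρ.nontrivial
  refine ⟨I, inferInstance, inferInstance, inferInstance, rfl, fun i => TorsorAux.sub ρ (𝒜 i),
    fun i j h => TorsorAux.sub_mono ρ (hmono h), ?_, ?_, ?_, ?_⟩
  · intro i
    exact (Subalgebra.fg_iff_finiteType _).2 (TorsorAux.sub_main ρ hρ _ (hhopf i) (hfg i)).2
  · intro i
    infer_instance
  · intro b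
    have key : ∀ w : B ⊗[k] A, ∃ i, w ∈
        (Algebra.TensorProduct.map (AlgHom.id k B) (𝒜 i).val).range := by
      intro w
      induction w with
      | zero => exact ⟨Classical.arbitrary I, zero_mem _⟩
      | tmul b a =>
        obtain ⟨i, hi⟩ := hunion a
        exact ⟨i, b ⊗ₜ ⟨a, hi⟩, rfl⟩
      | add x y hx hy =>
        obtain ⟨i, x, rfl⟩ := hx
        obtain ⟨j, y, rfl⟩ := hy
        obtain ⟨l, hil, hjl⟩ := exists_ge_ge i j
        have aux : ∀ {i : I} (_ : i ≤ l) (z : B ⊗[k] 𝒜 i),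
            Algebra.TensorProduct.map (AlgHom.id k B) (𝒜 i).val z ∈
            (Algebra.TensorProduct.map (AlgHom.id k B) (𝒜 l).val).range := by
          intro i h z
          refine ⟨Algebra.TensorProduct.map (AlgHom.id k B) (Subalgebra.inclusion (hmono h)) z, ?_⟩
          induction z with
          | zero => simp
          | add x y hx hy => simp only [map_add, hx, hy]
          | tmul b c => rfl
        exact ⟨l, add_mem (aux hil x) (aux hjl y)⟩
    exact key (ρ b)
  · intro i j h
    exact TorsorAux.ff_tower (Subalgebra.inclusion (TorsorAux.sub_mono ρ (hmono h))).toRingHom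
      (TorsorAux.sub ρ (𝒜 j)).val.toRingHom
      (TorsorAux.sub_main ρ hρ _ (hhopf i) (hfg i)).1
      (TorsorAux.sub_main ρ hρ _ (hhopf j) (hfg j)).1
end

section
/- Let k be an algebraically closed field and let A be a commutative Hopf algebra over k which is the union of a directed (under inclusion) family (A_i)_{i ∈ I} of finitely generated sub-Hopf-algebras, where the directed index poset I is at most countable. Then every torsor algebra B for A admits a k-algebra homomorphism B → k. (Equivalently: every torsor under the affine group scheme G = Spec A over k is trivial, i.e. has a k-rational point.) -/
open TensorProduct

lemma tt_points {k R : Type} [Field k] [CommRing R] [Algebra k R] (x : R) (hx : ¬ IsNilpotent x) :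
    ∃ (L : Type) (_ : Field L) (_ : Algebra k L) (v : R →ₐ[k] L), v x ≠ 0 := by
  obtain ⟨P, hP, hxP⟩ : ∃ P : Ideal R, P.IsPrime ∧ x ∉ P := by
    by_contra! h
    apply hx
    rw [← mem_nilradical, nilradical_eq_sInf]
    exact (Submodule.mem_sInf).mpr fun P hP => h P hP
  exact ⟨P.ResidueField, inferInstance, inferInstance, IsScalarTower.toAlgHom k R P.ResidueField,
    by simpa using hxP⟩

lemma tt_minimal {S : Type} [CommRing S] (η : Ideal S) (hη : η ∈ minimalPrimes S) (x : S)
    (hx : x ∈ η) : ∃ y, y ∉ η ∧ IsNilpotent (x * y) := by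
  have hηp : η.IsPrime := hη.1.1
  by_contra! h
  obtain ⟨P, hP, -, hd⟩ := Ideal.exists_le_prime_disjoint (⊥ : Ideal S)
    (η.primeCompl ⊔ Submonoid.powers x) (by
      rw [Set.disjoint_left]
      intro z hz hz'
      rw [SetLike.mem_coe, Submonoid.mem_sup] at hz'
      obtain ⟨y, hy, _, ⟨n, rfl⟩, rfl⟩ := hz'
      refine h y hy ⟨n + 1, ?_⟩
      have h0 : y * x ^ n = 0 := hz
      rw [mul_pow, pow_succ' y, pow_succ]
      linear_combination (x * y ^ n) * h0)
  have hle : P ≤ η := by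
    intro z hz
    by_contra hzη
    exact Set.disjoint_left.mp hd hz (Submonoid.mem_sup_left (S := η.primeCompl) hzη)
  have hxP : x ∈ P := hη.2 ⟨hP, bot_le⟩ hle hx
  exact Set.disjoint_left.mp hd hxP (Submonoid.mem_sup_right (Submonoid.mem_powers x))

lemma tt_generic {k S T : Type} [Field k] [CommRing S] [CommRing T] [Algebra k S] [Algebra k T]
    [Nontrivial S] [Algebra.FiniteType k S] [Algebra.FiniteType k T]
    (ι : S →ₐ[k] T) (hι : Function.Injective ι) :
    ∃ f : S, ¬ IsNilpotent f ∧ ∀ q : Ideal S, q.IsPrime → f ∉ q →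
      ∃ Q : Ideal T, Q.IsPrime ∧ Q.comap ι.toRingHom = q := by
  have hN : IsNoetherianRing S := Algebra.FiniteType.isNoetherianRing k S
  have hft : ι.toRingHom.FiniteType := by
    have h2 : ((ι.toRingHom).comp (algebraMap k S)).FiniteType := by
      have : (ι.toRingHom).comp (algebraMap k S) = algebraMap k T := ι.comp_algebraMap
      rw [this]
      exact RingHom.finiteType_algebraMap.mpr inferInstance
    exact RingHom.FiniteType.of_comp_finiteType h2
  have hfp : ι.toRingHom.FinitePresentation := RingHom.FinitePresentation.of_finiteType.mp hft
  obtain ⟨D, hD⟩ := PrimeSpectrum.exists_constructibleSetData_iff.mpr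
    (PrimeSpectrum.isConstructible_range_comap hfp)
  obtain ⟨η, hη⟩ : (minimalPrimes S).Nonempty :=
    Set.nonempty_coe_sort.mp (Ideal.nonempty_minimalPrimes bot_ne_top)
  have hηp : η.IsPrime := hη.1.1
  obtain ⟨Q, hQ, hQη⟩ := Ideal.exists_comap_eq_of_mem_minimalPrimes_of_injective
    (f := ι.toRingHom) hι η hη
  have hmem : (⟨η, hηp⟩ : PrimeSpectrum S) ∈ D.toSet := by
    rw [hD]
    exact ⟨⟨Q, hQ⟩, PrimeSpectrum.ext hQη⟩
  simp only [PrimeSpectrum.ConstructibleSetData.toSet, Set.mem_iUnion] at hmem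
  obtain ⟨C, hC, hmem⟩ := hmem
  simp only [PrimeSpectrum.BasicConstructibleSetData.toSet, Set.mem_sdiff,
    PrimeSpectrum.mem_zeroLocus, Set.singleton_subset_iff, SetLike.mem_coe] at hmem
  have hs : ∀ i, ∃ y, y ∉ η ∧ IsNilpotent (C.g i * y) := by
    exact fun i => tt_minimal η hη _ (hmem.1 ⟨i, rfl⟩)
  choose y hy hny using hs
  have hfη : C.f * ∏ i, y i ∉ η := by
    intro h
    rcases hηp.mem_or_mem h with h | h
    · exact hmem.2 h
    · obtain ⟨i, _, hi⟩ := (Ideal.IsPrime.prod_mem_iff (hp := hηp)).mp h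
      exact hy i hi
  refine ⟨C.f * ∏ i, y i, fun h => hfη ?_, ?_⟩
  · obtain ⟨n, hn⟩ := h
    exact hηp.mem_of_pow_mem n (hn ▸ η.zero_mem)
  · intro q hq hfq
    have : (⟨q, hq⟩ : PrimeSpectrum S) ∈ D.toSet := by
      simp only [PrimeSpectrum.ConstructibleSetData.toSet, Set.mem_iUnion]
      refine ⟨C, hC, ?_⟩
      simp only [PrimeSpectrum.BasicConstructibleSetData.toSet, Set.mem_sdiff,
        PrimeSpectrum.mem_zeroLocus, Set.singleton_subset_iff, SetLike.mem_coe]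
      refine ⟨?_, fun h => hfq (q.mul_mem_right _ h)⟩
      rintro _ ⟨i, rfl⟩
      obtain ⟨n, hn⟩ := hny i
      rcases hq.mem_or_mem (hq.mem_of_pow_mem n (hn ▸ q.zero_mem)) with h | h
      · exact h
      · exact absurd (q.mul_mem_left _ (Ideal.prod_mem _ (Finset.mem_univ i) h)) hfq
    rw [hD] at this
    obtain ⟨Q', hQ'⟩ := this
    exact ⟨Q'.asIdeal, Q'.isPrime, congrArg PrimeSpectrum.asIdeal hQ'⟩

lemma tt_generic' {k S T : Type} [Field k] [CommRing S] [CommRing T] [Algebra k S] [Algebra k T]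
    [Nontrivial S] [Algebra.FiniteType k S] [Algebra.FiniteType k T]
    (ι : S →ₐ[k] T) (hι : Function.Injective ι) :
    ∃ f : S, ¬ IsNilpotent f ∧ ∀ (L : Type) [Field L] [Algebra k L] (u : S →ₐ[k] L), u f ≠ 0 →
      ∃ (L' : Type) (_ : Field L') (_ : Algebra k L') (j : L →ₐ[k] L') (u' : T →ₐ[k] L'),
        u'.comp ι = j.comp u := by
  obtain ⟨f, hf, H⟩ := tt_generic ι hι
  refine ⟨f, hf, fun L _ _ u huf => ?_⟩
  have hq : (RingHom.ker u).IsPrime := RingHom.ker_isPrime u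
  obtain ⟨Q, hQ, hQq⟩ := H (RingHom.ker u) hq huf
  let a : (RingHom.ker u).ResidueField →+* L := Ideal.ResidueField.lift _ u.toRingHom le_rfl
    (by
      intro s hs
      simp only [Submonoid.mem_comap, IsUnit.mem_submonoid_iff, isUnit_iff_ne_zero]
      exact hs)
  let b : (RingHom.ker u).ResidueField →+* Q.ResidueField :=
    Ideal.ResidueField.map _ _ ι.toRingHom hQq.symm
  let := a.toAlgebra
  let := b.toAlgebra
  obtain ⟨M, hM⟩ := Ideal.exists_maximal (L ⊗[(RingHom.ker u).ResidueField] Q.ResidueField)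
  let : Field ((L ⊗[(RingHom.ker u).ResidueField] Q.ResidueField) ⧸ M) := Ideal.Quotient.field M
  let j : L →+* ((L ⊗[(RingHom.ker u).ResidueField] Q.ResidueField) ⧸ M) :=
    (Ideal.Quotient.mk M).comp Algebra.TensorProduct.includeLeftRingHom
  let w : T →+* ((L ⊗[(RingHom.ker u).ResidueField] Q.ResidueField) ⧸ M) :=
    ((Ideal.Quotient.mk M).comp
      (Algebra.TensorProduct.includeRight : Q.ResidueField →ₐ[(RingHom.ker u).ResidueField] _).toRingHom).comp
        (algebraMap T Q.ResidueField)
  have key : ∀ s, w (ι s) = j (u s) := by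
    intro s
    have h1 : algebraMap T Q.ResidueField (ι s) =
      algebraMap (RingHom.ker u).ResidueField Q.ResidueField (algebraMap S _ s) := by
      change _ = b _
      exact (Ideal.ResidueField.map_algebraMap _ _ _ _ s).symm
    have h2 : u s = algebraMap (RingHom.ker u).ResidueField L (algebraMap S _ s) := by
      change _ = a _
      exact (Ideal.ResidueField.lift_algebraMap ..).symm
    simp only [w, j, RingHom.comp_apply, h1, h2]
    congr 1
    change Algebra.TensorProduct.includeRight _ = Algebra.TensorProduct.includeLeft (S := (RingHom.ker u).ResidueField) _
    rw [AlgHom.commutes, AlgHom.commutes]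
  let : Algebra k ((L ⊗[(RingHom.ker u).ResidueField] Q.ResidueField) ⧸ M) :=
    (j.comp (algebraMap k L)).toAlgebra
  refine ⟨_, inferInstance, this, { j with commutes' := fun _ => rfl }, { w with commutes' := ?_ }, ?_⟩
  · intro c
    change w _ = j _
    rw [← ι.commutes, key, u.commutes]
  · ext s
    exact key s

section conv
open WithConv

variable {k S : Type} [Field k] [CommRing S] [HopfAlgebra k S]

/-- The product of two points of an affine group scheme. -/
noncomputable def ttMul {L : Type} [CommRing L] [Algebra k L] (f g : S →ₐ[k] L) : S →ₐ[k] L :=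
  (toConv f * toConv g).ofConv

/-- The inverse of a point of an affine group scheme. -/
noncomputable def ttInv {L : Type} [CommRing L] [Algebra k L] (f : S →ₐ[k] L) : S →ₐ[k] L :=
  f.comp (HopfAlgebra.antipodeAlgHom k S)

/-- The neutral point of an affine group scheme. -/
noncomputable def ttOne (k S : Type) [Field k] [CommRing S] [HopfAlgebra k S]
    (L : Type) [CommRing L] [Algebra k L] : S →ₐ[k] L :=
  (1 : WithConv (S →ₐ[k] L)).ofConv

variable {L : Type} [CommRing L] [Algebra k L]

lemma ttMul_assoc (f g h : S →ₐ[k] L) : ttMul (ttMul f g) h = ttMul f (ttMul g h) := by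
  simp [ttMul, mul_assoc]

lemma ttOne_mul (f : S →ₐ[k] L) : ttMul (ttOne k S L) f = f := by
  simp [ttMul, ttOne]

lemma ttMul_one (f : S →ₐ[k] L) : ttMul f (ttOne k S L) = f := by
  simp [ttMul, ttOne]

lemma comp_ttMul {L' : Type} [CommRing L'] [Algebra k L'] (j : L →ₐ[k] L') (f g : S →ₐ[k] L) :
    j.comp (ttMul f g) = ttMul (j.comp f) (j.comp g) :=
  AlgHom.comp_convMul_distrib j (toConv f) (toConv g)

lemma comp_ttOne {L' : Type} [CommRing L'] [Algebra k L'] (j : L →ₐ[k] L') :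
    j.comp (ttOne k S L) = ttOne k S L' := by
  ext s
  simp [ttOne, AlgHom.convOne_def, Algebra.ofId_apply]

lemma ttInv_mul (f : S →ₐ[k] L) : ttMul (ttInv f) f = ttOne k S L := by
  have h : ttMul (HopfAlgebra.antipodeAlgHom k S) (AlgHom.id k S) = ttOne k S S :=
    congrArg ofConv AlgHom.antipode_id_cancel
  have := congrArg f.comp h
  rwa [comp_ttMul, comp_ttOne, AlgHom.comp_id] at this

lemma ttMul_inv (f : S →ₐ[k] L) : ttMul f (ttInv f) = ttOne k S L := by
  have h : ttMul (AlgHom.id k S) (HopfAlgebra.antipodeAlgHom k S) = ttOne k S S :=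
    congrArg ofConv (mul_eq_one_comm.mp
      (AlgHom.antipode_id_cancel (R := k) (A := S)))
  have := congrArg f.comp h
  rwa [comp_ttMul, comp_ttOne, AlgHom.comp_id] at this

lemma ttMul_comp {T : Type} [CommRing T] [HopfAlgebra k T] (f g : T →ₐ[k] L) (ι : S →ₐc[k] T) :
    (ttMul f g).comp (ι : S →ₐ[k] T) = ttMul (f.comp ι) (g.comp ι) :=
  AlgHom.convMul_comp_bialgHom_distrib (toConv f) (toConv g) ι

lemma ttOne_comp {T : Type} [CommRing T] [HopfAlgebra k T] (ι : S →ₐc[k] T) :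
    (ttOne k T L).comp (ι : S →ₐ[k] T) = ttOne k S L := by
  ext s
  simp [ttOne, AlgHom.convOne_def, Algebra.ofId_apply]

end conv

lemma tt_compositum {k K L : Type} [Field k] [Field K] [Field L] [Algebra k K] [Algebra k L] :
    ∃ (M : Type) (_ : Field M) (_ : Algebra k M) (_ : K →ₐ[k] M) (_ : L →ₐ[k] M), True := by
  obtain ⟨M, _, _, v, -⟩ := tt_points (k := k) (R := K ⊗[k] L) 1
    (fun ⟨n, hn⟩ => by simp at hn)
  exact ⟨M, _, _, v.comp Algebra.TensorProduct.includeLeft,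
    v.comp Algebra.TensorProduct.includeRight, trivial⟩

/-- Surjectivity of a dominant morphism of algebraic groups, in terms of field-valued points. -/
lemma tt_lift {k S T : Type} [Field k] [CommRing S] [CommRing T] [HopfAlgebra k S]
    [HopfAlgebra k T] [Algebra.FiniteType k S] [Algebra.FiniteType k T]
    (ι : S →ₐc[k] T) (hι : Function.Injective ι) {K : Type} [Field K] [Algebra k K]
    (g : S →ₐ[k] K) :
    ∃ (L : Type) (_ : Field L) (_ : Algebra k L) (j : K →ₐ[k] L) (g' : T →ₐ[k] L),
      g'.comp (ι : S →ₐ[k] T) = j.comp g := by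
  have hnt : Nontrivial S := g.toRingHom.domain_nontrivial
  obtain ⟨f, hf, H⟩ := tt_generic' (ι : S →ₐ[k] T) hι
  obtain ⟨L0, _, _, v, hv⟩ := tt_points (k := k) f hf
  obtain ⟨L1, _, _, jK, jL, -⟩ := tt_compositum (k := k) (K := K) (L := L0)
  let F : S →ₐ[k] K ⊗[k] S :=
    ttMul (Algebra.TensorProduct.includeLeft.comp (ttInv g)) Algebra.TensorProduct.includeRight
  have hF : ¬ IsNilpotent (F f) := by
    let h0 : S →ₐ[k] L1 := ttMul (jK.comp g) (jL.comp v)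
    let θ : K ⊗[k] S →ₐ[k] L1 := Algebra.TensorProduct.lift jK h0 (fun _ _ => Commute.all _ _)
    have h1 : θ.comp F = jL.comp v := by
      have e1 : θ.comp (Algebra.TensorProduct.includeLeft.comp (ttInv g)) =
          ttInv (jK.comp g) := by
        ext s; simp [θ, ttInv]
      have e2 : θ.comp Algebra.TensorProduct.includeRight = h0 := by
        ext s; simp [θ]
      simp only [F, comp_ttMul, e1, e2, h0]
      rw [← ttMul_assoc, ttInv_mul, ttOne_mul]
    intro hn
    have h2 := hn.map θ
    have h3 : θ (F f) = jL (v f) := DFunLike.congr_fun h1 f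
    rw [h3, isNilpotent_iff_eq_zero] at h2
    exact hv ((map_eq_zero jL).mp h2)
  let m : K ⊗[k] S →ₐ[k] K ⊗[k] T := Algebra.TensorProduct.map (AlgHom.id k K) (ι : S →ₐ[k] T)
  have hm : Function.Injective m :=
    Module.Flat.lTensor_preserves_injective_linearMap (M := K) (ι : S →ₐ[k] T).toLinearMap hι
  have hF' : ¬ IsNilpotent (m (F f)) := by rwa [IsNilpotent.map_iff hm]
  obtain ⟨L2, _, _, w, hw⟩ := tt_points (k := k) _ hF'
  let jj : K →ₐ[k] L2 := w.comp Algebra.TensorProduct.includeLeft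
  let h : T →ₐ[k] L2 := w.comp Algebra.TensorProduct.includeRight
  let u : S →ₐ[k] L2 := ttMul (ttInv (jj.comp g)) (h.comp (ι : S →ₐ[k] T))
  have hu : u = (w.comp m).comp F := by
    simp only [F, comp_ttMul, u]
    congr 1
    ext s; simp [jj, m, ttInv]
  obtain ⟨L3, _, _, j, u', hu'⟩ := H L2 u (by rw [hu]; exact hw)
  refine ⟨L3, inferInstance, inferInstance, j.comp jj, ttMul (j.comp h) (ttInv u'), ?_⟩
  have e1 : ttMul ((ttMul (j.comp h) (ttInv u')).comp (ι : S →ₐ[k] T)) (j.comp u) =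
      (j.comp h).comp ι := by
    rw [← hu', ← ttMul_comp, ttMul_assoc, ttInv_mul, ttMul_one]
  have e2 : ttMul ((j.comp jj).comp g) (j.comp u) = (j.comp h).comp ι := by
    rw [AlgHom.comp_assoc j jj g, AlgHom.comp_assoc j h, ← comp_ttMul, ← ttMul_assoc, ttMul_inv, ttOne_mul]
  have e3 := congrArg (fun z => ttMul z (ttInv (j.comp u))) (e1.trans e2.symm)
  simpa only [ttMul_assoc, ttMul_inv, ttMul_one] using e3

section sub
variable {k A : Type} [Field k] [CommRing A] [HopfAlgebra k A] (S : Subalgebra k A)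

/-- The inclusion of the tensor square. -/
noncomputable def ttSq : S ⊗[k] S →ₐ[k] A ⊗[k] A := Algebra.TensorProduct.map S.val S.val

lemma ttSq_inj : Function.Injective (ttSq S) :=
  TensorProduct.map_injective_of_flat_flat S.val.toLinearMap S.val.toLinearMap
    Subtype.val_injective Subtype.val_injective

/-- The restricted comultiplication. -/
noncomputable def ttComul (hS : S.IsHopfSub k) : S →ₐ[k] S ⊗[k] S :=
  (AlgEquiv.ofInjective (ttSq S) (ttSq_inj S)).symm.toAlgHom.comp
    (((Bialgebra.comulAlgHom k A).comp S.val).codRestrict (ttSq S).range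
      (fun s => by
        obtain ⟨z, hz⟩ := hS.1 s s.2
        exact ⟨z, hz⟩))

lemma ttComul_spec (hS : S.IsHopfSub k) (s : S) :
    ttSq S (ttComul S hS s) = Coalgebra.comul (R := k) (s : A) := by
  have h := AlgEquiv.apply_symm_apply (AlgEquiv.ofInjective (ttSq S) (ttSq_inj S))
    ((((Bialgebra.comulAlgHom k A).comp S.val).codRestrict (ttSq S).range
      (fun s => by
        obtain ⟨z, hz⟩ := hS.1 s s.2
        exact ⟨z, hz⟩)) s)
  exact congrArg Subtype.val h

lemma ttComul_spec' (hS : S.IsHopfSub k) (s : S) :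
    Algebra.TensorProduct.map S.val S.val (ttComul S hS s) = Coalgebra.comul (R := k) (s : A) :=
  ttComul_spec S hS s

/-- The Hopf algebra structure on a sub-Hopf-algebra. -/
@[reducible] noncomputable def ttHopf (hS : S.IsHopfSub k) : HopfAlgebra k S :=
  letI bi : Bialgebra k S := Bialgebra.ofAlgHom (ttComul S hS)
    ((Bialgebra.counitAlgHom k A).comp S.val)
    (by
      have hinj : Function.Injective
          (Algebra.TensorProduct.map S.val (ttSq S) : S ⊗[k] (S ⊗[k] S) →ₐ[k] A ⊗[k] (A ⊗[k] A)) :=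
        TensorProduct.map_injective_of_flat_flat S.val.toLinearMap (ttSq S).toLinearMap
          Subtype.val_injective (ttSq_inj S)
      have e1 : (Algebra.TensorProduct.map S.val (ttSq S)).comp
          ((Algebra.TensorProduct.assoc k k k S S S).toAlgHom.comp
            (Algebra.TensorProduct.map (ttComul S hS) (.id k S))) =
          ((Algebra.TensorProduct.assoc k k k A A A).toAlgHom.comp
            (Algebra.TensorProduct.map (Bialgebra.comulAlgHom k A) (.id k A))).comp (ttSq S) := by
        have e0 : (Algebra.TensorProduct.map S.val (ttSq S)).comp
            (Algebra.TensorProduct.assoc k k k S S S).toAlgHom =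
            (Algebra.TensorProduct.assoc k k k A A A).toAlgHom.comp
              (Algebra.TensorProduct.map (ttSq S) S.val) := by
          ext <;> simp [ttSq, Algebra.TensorProduct.one_def]
        rw [← AlgHom.comp_assoc, e0, AlgHom.comp_assoc, AlgHom.comp_assoc]
        congr 1
        ext s
        · simp [ttComul_spec', ttSq]
        · simp [ttSq]
      have e2 : (Algebra.TensorProduct.map S.val (ttSq S)).comp
            (Algebra.TensorProduct.map (.id k S) (ttComul S hS)) =
            (Algebra.TensorProduct.map (.id k A) (Bialgebra.comulAlgHom k A)).comp (ttSq S) := by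
        ext s
        · simp [ttSq]
        · simp [ttComul_spec', ttSq]
      apply AlgHom.ext
      intro s
      apply hinj
      have h1 := DFunLike.congr_fun e1 (ttComul S hS s)
      have h2 := DFunLike.congr_fun e2 (ttComul S hS s)
      refine h1.trans (Eq.trans ?_ h2.symm)
      simp only [AlgHom.comp_apply, ttComul_spec]
      exact Coalgebra.coassoc_apply (R := k) (s : A))
    (by
      have hinj : Function.Injective
          (Algebra.TensorProduct.map (.id k k) S.val : k ⊗[k] S →ₐ[k] k ⊗[k] A) :=
        Module.Flat.lTensor_preserves_injective_linearMap (M := k) S.val.toLinearMap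
          Subtype.val_injective
      have e1 : (Algebra.TensorProduct.map (.id k k) S.val).comp (Algebra.TensorProduct.map
          ((Bialgebra.counitAlgHom k A).comp S.val) (.id k S)) =
          (Algebra.TensorProduct.map (Bialgebra.counitAlgHom k A) (.id k A)).comp (ttSq S) := by
        ext s <;> simp [ttSq]
      apply AlgHom.ext
      intro s
      apply hinj
      refine (DFunLike.congr_fun e1 (ttComul S hS s)).trans ?_
      simp only [AlgHom.comp_apply, ttComul_spec]
      refine (Coalgebra.rTensor_counit_comul (R := k) (s : A)).trans ?_
      simp)
    (by
      have hinj : Function.Injective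
          (Algebra.TensorProduct.map S.val (.id k k) : S ⊗[k] k →ₐ[k] A ⊗[k] k) :=
        Module.Flat.rTensor_preserves_injective_linearMap (M := k) S.val.toLinearMap
          Subtype.val_injective
      have e1 : (Algebra.TensorProduct.map S.val (.id k k)).comp (Algebra.TensorProduct.map
          (.id k S) ((Bialgebra.counitAlgHom k A).comp S.val)) =
          (Algebra.TensorProduct.map (.id k A) (Bialgebra.counitAlgHom k A)).comp (ttSq S) := by
        ext s <;> simp [ttSq]
      apply AlgHom.ext
      intro s
      apply hinj
      refine (DFunLike.congr_fun e1 (ttComul S hS s)).trans ?_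
      simp only [AlgHom.comp_apply, ttComul_spec]
      refine (Coalgebra.lTensor_counit_comul (R := k) (s : A)).trans ?_
      simp)
  { bi with
    antipode := ((HopfAlgebra.antipode k (A := A)).comp S.val.toLinearMap).codRestrict
      (Subalgebra.toSubmodule S) (fun s => hS.2 s s.2)
    mul_antipode_rTensor_comul := by
      ext s
      have e : ∀ z : S ⊗[k] S, ((LinearMap.mul' k S ((((HopfAlgebra.antipode k (A := A)).comp
          S.val.toLinearMap).codRestrict (Subalgebra.toSubmodule S)
            (fun s => hS.2 s s.2)).rTensor S z) : S) : A) =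
          LinearMap.mul' k A ((HopfAlgebra.antipode k (A := A)).rTensor A (ttSq S z)) := by
        intro z
        induction z with
        | zero => simp
        | add x y hx hy => simp only [map_add, Subalgebra.coe_add, hx, hy]
        | tmul x y => simp [ttSq]; rfl
      refine (e (ttComul S hS s)).trans ?_
      rw [ttComul_spec]
      exact HopfAlgebra.mul_antipode_rTensor_comul_apply (R := k) (s : A)
    mul_antipode_lTensor_comul := by
      ext s
      have e : ∀ z : S ⊗[k] S, ((LinearMap.mul' k S ((((HopfAlgebra.antipode k (A := A)).comp
          S.val.toLinearMap).codRestrict (Subalgebra.toSubmodule S)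
            (fun s => hS.2 s s.2)).lTensor S z) : S) : A) =
          LinearMap.mul' k A ((HopfAlgebra.antipode k (A := A)).lTensor A (ttSq S z)) := by
        intro z
        induction z with
        | zero => simp
        | add x y hx hy => simp only [map_add, Subalgebra.coe_add, hx, hy]
        | tmul x y => simp [ttSq]; rfl
      refine (e (ttComul S hS s)).trans ?_
      rw [ttComul_spec]
      exact HopfAlgebra.mul_antipode_lTensor_comul_apply (R := k) (s : A) }

lemma tt_lift_sub {S S' : Subalgebra k A} (hS : S.IsHopfSub k) (hS' : S'.IsHopfSub k)
    (hle : S ≤ S') (hfg : S.FG) (hfg' : S'.FG) {K : Type} [Field K] [Algebra k K]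
    (g : S →ₐ[k] K) :
    ∃ (L : Type) (_ : Field L) (_ : Algebra k L) (j : K →ₐ[k] L) (g' : S' →ₐ[k] L),
      g'.comp (Subalgebra.inclusion hle) = j.comp g := by
  let := ttHopf S hS
  let := ttHopf S' hS'
  have : Algebra.FiniteType k S := S.fg_iff_finiteType.mp hfg
  have : Algebra.FiniteType k S' := S'.fg_iff_finiteType.mp hfg'
  let ι : S →ₐc[k] S' := BialgHom.ofAlgHom (Subalgebra.inclusion hle) (by ext; rfl) (by
    apply AlgHom.ext
    intro s
    apply ttSq_inj S'
    have e1 : (ttSq S').comp (Algebra.TensorProduct.map (Subalgebra.inclusion hle)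
      (Subalgebra.inclusion hle)) = ttSq S := by
      ext <;> simp [ttSq]
    refine (DFunLike.congr_fun e1 (ttComul S hS s)).trans ?_
    rw [ttComul_spec]
    exact (ttComul_spec S' hS' (Subalgebra.inclusion hle s)).symm)
  exact tt_lift ι (Subalgebra.inclusion_injective hle) g

end sub

/-- The subalgebra `X ⊗ W` of `X ⊗ Y`. -/
noncomputable def ttR {k : Type} [Field k] (X : Type) {Y : Type} [CommRing X] [Algebra k X]
    [CommRing Y] [Algebra k Y] (W : Subalgebra k Y) : Subalgebra k (X ⊗[k] Y) :=
  (Algebra.TensorProduct.map (AlgHom.id k X) W.val).range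

section ttR
variable {k X Y : Type} [Field k] [CommRing X] [Algebra k X] [CommRing Y] [Algebra k Y]

lemma ttR_inj (W : Subalgebra k Y) :
    Function.Injective (Algebra.TensorProduct.map (AlgHom.id k X) W.val) :=
  Module.Flat.lTensor_preserves_injective_linearMap (M := X) W.val.toLinearMap
    Subtype.val_injective

lemma tmul_mem_ttR {W : Subalgebra k Y} (x : X) {y : Y} (hy : y ∈ W) : x ⊗ₜ[k] y ∈ ttR X W :=
  ⟨x ⊗ₜ ⟨y, hy⟩, by simp⟩

lemma ttR_le {W : Subalgebra k Y} {D : Subalgebra k (X ⊗[k] Y)}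
    (h : ∀ (x : X) (y : Y), y ∈ W → x ⊗ₜ[k] y ∈ D) : ttR X W ≤ D := by
  rintro _ ⟨z, rfl⟩
  induction z with
  | zero => simp
  | add a b ha hb =>
    have := D.add_mem ha hb
    simpa using this
  | tmul x y => exact h x y y.2

lemma ttR_mono {W W' : Subalgebra k Y} (h : W ≤ W') : ttR X W ≤ ttR X W' :=
  ttR_le fun x _ hy => tmul_mem_ttR x (h hy)

lemma ttR_finset {W : Subalgebra k Y} {z : X ⊗[k] Y} (hz : z ∈ ttR X W) :
    ∃ t : Finset Y, (t : Set Y) ⊆ W ∧ z ∈ ttR X (Algebra.adjoin k (t : Set Y)) := by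
  classical
  obtain ⟨z, rfl⟩ := hz
  induction z with
  | zero => exact ⟨∅, by simp, by simp⟩
  | add a b ha hb =>
    obtain ⟨t, ht, hat⟩ := ha
    obtain ⟨t', ht', hbt⟩ := hb
    refine ⟨t ∪ t', by simp [ht, ht'], ?_⟩
    have := (ttR X (Algebra.adjoin k ((t ∪ t' : Finset Y) : Set Y))).add_mem
      (ttR_mono (Algebra.adjoin_mono (by simp)) hat) (ttR_mono (Algebra.adjoin_mono (by simp)) hbt)
    simpa using this
  | tmul x y =>
    exact ⟨{y.1}, by simp, tmul_mem_ttR x (Algebra.subset_adjoin (by simp))⟩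

/-- Contraction with a functional. -/
noncomputable def ttC (Y : Type) [CommRing Y] [Algebra k Y] (f : X →ₗ[k] k) : X ⊗[k] Y →ₗ[k] Y :=
  (TensorProduct.lid k Y).toLinearMap ∘ₗ f.rTensor Y

lemma ttC_tmul (f : X →ₗ[k] k) (x : X) (y : Y) : ttC Y f (x ⊗ₜ y) = f x • y := by
  simp [ttC]

lemma ttC_mem {W : Subalgebra k Y} {z : X ⊗[k] Y} (hz : z ∈ ttR X W) (f : X →ₗ[k] k) :
    ttC Y f z ∈ W := by
  obtain ⟨z, rfl⟩ := hz
  induction z with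
  | zero => simp
  | add a b ha hb =>
    have := W.add_mem ha hb
    simpa using this
  | tmul x y =>
    change ttC Y f (x ⊗ₜ (y : Y)) ∈ W
    rw [ttC_tmul]
    exact W.smul_mem y.2 _

lemma mem_ttR {W : Subalgebra k Y} {z : X ⊗[k] Y} (h : ∀ f : X →ₗ[k] k, ttC Y f z ∈ W) :
    z ∈ ttR X W := by
  classical
  let e := Module.Basis.ofVectorSpace k X
  obtain ⟨c, rfl⟩ := TensorProduct.eq_repr_basis_left e z
  refine Subalgebra.sum_mem _ fun i _ => tmul_mem_ttR _ ?_
  have h1 := h (e.coord i)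
  simp only [Finsupp.sum, map_sum, ttC_tmul, Module.Basis.coord_apply, Module.Basis.repr_self,
    Finsupp.single_apply] at h1
  by_cases hci : c i = 0
  · rw [hci]; exact W.zero_mem
  · simpa [hci] using h1

end ttR

section torsor
variable {k A B : Type} [Field k] [CommRing A] [HopfAlgebra k A] [CommRing B] [Algebra k B]
  (ρ : B →ₐ[k] B ⊗[k] A)

/-- The Galois map. -/
noncomputable def ttG : B ⊗[k] B →ₐ[k] B ⊗[k] A :=
  Algebra.TensorProduct.lift (Algebra.TensorProduct.includeLeft : B →ₐ[k] B ⊗[k] A) ρ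
      (fun _ _ => Commute.all _ _)

/-- The subalgebra of `B` of functions factoring through the quotient torsor. -/
noncomputable def ttB (S : Subalgebra k A) : Subalgebra k B := (ttR B S).comap ρ

lemma ttB_mono {S S' : Subalgebra k A} (h : S ≤ S') : ttB ρ S ≤ ttB ρ S' :=
  fun _ hb => ttR_mono h hb

lemma ttG_tmul (b c : B) : ttG ρ (b ⊗ₜ c) = b ⊗ₜ 1 * ρ c := by simp [ttG]

lemma ttG_mem {S : Subalgebra k A} {z : B ⊗[k] B} (hz : z ∈ ttR B (ttB ρ S)) :
    ttG ρ z ∈ ttR B S := by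
  have : ttR B (ttB ρ S) ≤ (ttR B S).comap (ttG ρ) := ttR_le fun x y hy => by
    change ttG ρ (x ⊗ₜ y) ∈ ttR B S
    rw [ttG_tmul]
    exact mul_mem (tmul_mem_ttR x S.one_mem) hy
  exact this hz

variable {ρ}

lemma tt_slice (f : B →ₗ[k] k) (z : B ⊗[k] B) :
    ρ (ttC B f z) = (ttC B f).rTensor A
      ((TensorProduct.assoc k B B A).symm (ρ.toLinearMap.lTensor B z)) := by
  have h : ∀ (b : B) (t : B ⊗[k] A),
      (ttC B f).rTensor A ((TensorProduct.assoc k B B A).symm (b ⊗ₜ t)) = f b • t := by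
    intro b t
    induction t with
    | zero => simp
    | add x y hx hy => simp only [tmul_add, map_add, hx, hy, smul_add]
    | tmul x y => simp [ttC_tmul, TensorProduct.smul_tmul']
  induction z with
  | zero => simp
  | add x y hx hy => simp only [map_add, hx, hy]
  | tmul x y =>
    rw [ttC_tmul, LinearMap.lTensor_tmul, h]
    simp

lemma tt_equivariant (hρ : IsTorsorAlgebra k A B ρ) (z : B ⊗[k] B) :
    (ttG ρ).toLinearMap.rTensor A
      ((TensorProduct.assoc k B B A).symm (ρ.toLinearMap.lTensor B z)) =
    (TensorProduct.assoc k B A A).symm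
      ((Coalgebra.comul (R := k) (A := A)).lTensor B (ttG ρ z)) := by
  let Lh : B ⊗[k] B →ₐ[k] (B ⊗[k] A) ⊗[k] A :=
    ((Algebra.TensorProduct.map (ttG ρ) (AlgHom.id k A)).comp
      (Algebra.TensorProduct.assoc k k k B B A).symm.toAlgHom).comp
        (Algebra.TensorProduct.map (AlgHom.id k B) ρ)
  let Rh : B ⊗[k] B →ₐ[k] (B ⊗[k] A) ⊗[k] A :=
    ((Algebra.TensorProduct.assoc k k k B A A).symm.toAlgHom.comp
      (Algebra.TensorProduct.map (AlgHom.id k B) (Bialgebra.comulAlgHom k A))).comp (ttG ρ)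
  have e : Lh = Rh := by
    apply Algebra.TensorProduct.ext
    · ext b
      simp [Lh, Rh, ttG, Algebra.TensorProduct.one_def]
    · ext b
      have h1 : Rh (1 ⊗ₜ b) = (TensorProduct.map ρ.toLinearMap LinearMap.id) (ρ b) := by
        have h2 := congrArg (TensorProduct.assoc k B A A).symm (hρ.coassoc b)
        rw [LinearEquiv.symm_apply_apply] at h2
        rw [h2]
        change (TensorProduct.assoc k B A A).symm
          ((TensorProduct.map LinearMap.id (Coalgebra.comul (R := k))) (ttG ρ (1 ⊗ₜ b))) = _
        rw [ttG_tmul]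
        congr 2
        exact one_mul _
      have h3 : ∀ t : B ⊗[k] A, (ttG ρ).toLinearMap.rTensor A
          ((TensorProduct.assoc k B B A).symm ((1 : B) ⊗ₜ t)) =
          (TensorProduct.map ρ.toLinearMap LinearMap.id) t := by
        intro t
        induction t with
        | zero => simp
        | add x y hx hy => simp only [tmul_add, map_add, hx, hy]
        | tmul x y =>
          simp [ttG, ← Algebra.TensorProduct.one_def]
      exact (h3 (ρ b)).trans h1.symm
  exact DFunLike.congr_fun e z

lemma tt_surj_aux (hρ : IsTorsorAlgebra k A B ρ) {S : Subalgebra k A} (hS : S.IsHopfSub k)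
    {a : A} (ha : a ∈ S) (z : B ⊗[k] B) (hz : ttG ρ z = 1 ⊗ₜ a) : z ∈ ttR B (ttB ρ S) := by
  apply mem_ttR
  intro f
  change ρ _ ∈ ttR B S
  obtain ⟨w, hw⟩ := hS.1 a ha
  let Γ : (B ⊗[k] B) ≃ₗ[k] (B ⊗[k] A) :=
    LinearEquiv.ofBijective (ttG ρ).toLinearMap hρ.galois_bijective
  let X : (B ⊗[k] A) ⊗[k] S :=
    (TensorProduct.assoc k B A S).symm ((1 : B) ⊗ₜ (S.val.toLinearMap.rTensor S w))
  let y' : (B ⊗[k] B) ⊗[k] S := Γ.symm.toLinearMap.rTensor S X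
  have hX : S.val.toLinearMap.lTensor (B ⊗[k] A) X =
      (TensorProduct.assoc k B A A).symm ((1 : B) ⊗ₜ Coalgebra.comul (R := k) a) := by
    rw [← hw]
    simp only [X]
    clear hw
    induction w with
    | zero => simp
    | add x y hx hy => simp only [tmul_add, map_add, hx, hy]
    | tmul x y => simp
  have hy : S.val.toLinearMap.lTensor (B ⊗[k] B) y' =
      (TensorProduct.assoc k B B A).symm (ρ.toLinearMap.lTensor B z) := by
    have hinj : Function.Injective ((ttG ρ).toLinearMap.rTensor A) :=
      Module.Flat.rTensor_preserves_injective_linearMap _ hρ.galois_bijective.1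
    apply hinj
    rw [tt_equivariant hρ, hz, LinearMap.lTensor_tmul, ← hX]
    simp only [y']
    generalize X = x
    induction x with
    | zero => simp
    | add x y hx hy => simp only [map_add, hx, hy]
    | tmul x s =>
      simp only [LinearMap.rTensor_tmul, LinearMap.lTensor_tmul]
      congr 1
      exact Γ.apply_symm_apply x
  rw [tt_slice, ← hy]
  refine ⟨(ttC B f).rTensor S y', ?_⟩
  generalize y' = x
  induction x with
  | zero => simp
  | add x y hx hy => simp only [map_add, hx, hy]
  | tmul x s => simp

lemma tt_fg (hρ : IsTorsorAlgebra k A B ρ) {S : Subalgebra k A} (hS : S.IsHopfSub k)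
    (hfg : S.FG) : (ttB ρ S).FG := by
  classical
  obtain ⟨s, hs⟩ := hfg
  have h1 : ∀ a : A, ∃ t : Finset B, (t : Set B) ⊆ ttB ρ S ∧ (a ∈ S → ∃ z,
      z ∈ ttR B (Algebra.adjoin k (t : Set B)) ∧ ttG ρ z = 1 ⊗ₜ a) := by
    intro a
    by_cases ha : a ∈ S
    · obtain ⟨z, hz⟩ := hρ.galois_bijective.2 (1 ⊗ₜ a)
      obtain ⟨t, ht, hzt⟩ := ttR_finset (tt_surj_aux hρ hS ha z hz)
      exact ⟨t, ht, fun _ => ⟨z, hzt, hz⟩⟩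
    · exact ⟨∅, by simp, fun h => absurd h ha⟩
  choose t ht hz using h1
  let C : Subalgebra k B := Algebra.adjoin k ((s.biUnion t : Finset B) : Set B)
  refine ⟨s.biUnion t, le_antisymm ?_ ?_⟩
  · rw [Algebra.adjoin_le_iff]
    simpa using fun a _ => ht a
  · let D : Subalgebra k (B ⊗[k] A) := (ttR B C).map (ttG ρ)
    have hD : S ≤ D.comap Algebra.TensorProduct.includeRight := by
      rw [← hs, Algebra.adjoin_le_iff]
      intro a ha
      obtain ⟨z, hzt, hza⟩ := hz a (by rw [← hs]; exact Algebra.subset_adjoin ha)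
      refine ⟨z, ttR_mono (Algebra.adjoin_mono ?_) hzt, hza⟩
      exact_mod_cast Finset.subset_biUnion_of_mem t ha
    have hD' : ttR B S ≤ D := ttR_le fun x y hy => by
      have e : x ⊗ₜ[k] y = x ⊗ₜ 1 * 1 ⊗ₜ y := by simp
      rw [e]
      refine mul_mem ⟨x ⊗ₜ 1, tmul_mem_ttR x C.one_mem, ?_⟩ (hD hy)
      exact (ttG_tmul ρ x 1).trans (by simp)
    intro b hb
    obtain ⟨z, hzC, hzb⟩ := hD' hb
    have hzb' : z = 1 ⊗ₜ b := hρ.galois_bijective.1 (by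
      refine hzb.trans ?_
      refine Eq.trans ?_ (ttG_tmul ρ 1 b).symm
      exact (one_mul _).symm)
    subst hzb'
    have hnt := hρ.nontrivial
    obtain ⟨f, hf⟩ := Module.Projective.exists_dual_ne_zero k (one_ne_zero : (1 : B) ≠ 0)
    have h5 := ttC_mem hzC f
    rw [ttC_tmul] at h5
    have h6 := C.smul_mem h5 (f 1)⁻¹
    rwa [smul_smul, inv_mul_cancel₀ hf, one_smul] at h6

/-- The restricted coaction. -/
noncomputable def ttRho (ρ : B →ₐ[k] B ⊗[k] A) (S : Subalgebra k A) : ttB ρ S →ₐ[k] B ⊗[k] S :=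
  (AlgEquiv.ofInjective _ (ttR_inj (X := B) S)).symm.toAlgHom.comp
    ((ρ.comp (ttB ρ S).val).codRestrict (ttR B S) (fun b => b.2))

lemma ttRho_spec (S : Subalgebra k A) (b : ttB ρ S) :
    Algebra.TensorProduct.map (AlgHom.id k B) S.val (ttRho ρ S b) = ρ b :=
  congrArg Subtype.val (AlgEquiv.apply_symm_apply (AlgEquiv.ofInjective _ (ttR_inj (X := B) S))
    ((ρ.comp (ttB ρ S).val).codRestrict (ttR B S) (fun b => b.2) b))

/-- The restricted Galois map. -/
noncomputable def ttGS (ρ : B →ₐ[k] B ⊗[k] A) (S : Subalgebra k A) :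
    B ⊗[k] ttB ρ S →ₐ[k] B ⊗[k] S :=
  Algebra.TensorProduct.lift (Algebra.TensorProduct.includeLeft : B →ₐ[k] B ⊗[k] S) (ttRho ρ S)
      (fun _ _ => Commute.all _ _)

lemma ttGS_spec (S : Subalgebra k A) (z : B ⊗[k] ttB ρ S) :
    Algebra.TensorProduct.map (AlgHom.id k B) S.val (ttGS ρ S z) =
      ttG ρ (Algebra.TensorProduct.map (AlgHom.id k B) (ttB ρ S).val z) := by
  have : (Algebra.TensorProduct.map (AlgHom.id k B) S.val).comp (ttGS ρ S) =
      (ttG ρ).comp (Algebra.TensorProduct.map (AlgHom.id k B) (ttB ρ S).val) := by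
    apply Algebra.TensorProduct.ext
    · ext b; simp [ttGS, ttG]
    · apply AlgHom.ext
      intro b
      simpa [ttGS, ttG] using congrArg (1 ⊗ₜ[k] 1 * ·) (ttRho_spec S b)
  exact DFunLike.congr_fun this z

lemma ttGS_bij (hρ : IsTorsorAlgebra k A B ρ) {S : Subalgebra k A} (hS : S.IsHopfSub k) :
    Function.Bijective (ttGS ρ S) := by
  constructor
  · intro x y hxy
    apply ttR_inj (X := B) (ttB ρ S)
    apply hρ.galois_bijective.1
    change ttG ρ _ = ttG ρ _
    rw [← ttGS_spec, ← ttGS_spec, hxy]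
  · intro y
    induction y with
    | zero => exact ⟨0, map_zero _⟩
    | add x y hx hy =>
      obtain ⟨x', rfl⟩ := hx
      obtain ⟨y', rfl⟩ := hy
      exact ⟨x' + y', map_add _ _ _⟩
    | tmul b s =>
      obtain ⟨z, hz⟩ := hρ.galois_bijective.2 (1 ⊗ₜ (s : A))
      obtain ⟨z', rfl⟩ := tt_surj_aux hρ hS s.2 z hz
      refine ⟨b ⊗ₜ 1 * z', ?_⟩
      apply ttR_inj (X := B) S
      rw [ttGS_spec, map_mul, map_mul]
      have : ttG ρ (Algebra.TensorProduct.map (AlgHom.id k B) (ttB ρ S).val z') = 1 ⊗ₜ (s : A) := hz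
      refine (congrArg _ this).trans ?_
      simp [ttG]

lemma tt_null [IsAlgClosed k] {R : Type} [CommRing R] [Algebra k R] [Algebra.FiniteType k R]
    (I : Ideal R) (hI : I ≠ ⊤) : ∃ φ : R →ₐ[k] k, ∀ x ∈ I, φ x = 0 := by
  obtain ⟨M, hM, hIM⟩ := Ideal.exists_le_maximal I hI
  let : Field (R ⧸ M) := Ideal.Quotient.field M
  have := finite_of_finite_type_of_isJacobsonRing k (R ⧸ M)
  let e : k ≃ₐ[k] R ⧸ M := AlgEquiv.ofBijective (Algebra.ofId k (R ⧸ M))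
    IsAlgClosed.algebraMap_bijective_of_isIntegral
  refine ⟨e.symm.toAlgHom.comp (Ideal.Quotient.mkₐ k M), fun x hx => ?_⟩
  have : Ideal.Quotient.mkₐ k M x = 0 := Ideal.Quotient.eq_zero_iff_mem.mpr (hIM hx)
  simpa using this

lemma tt_extend [IsAlgClosed k] (hρ : IsTorsorAlgebra k A B ρ) {S S' : Subalgebra k A}
    (hS : S.IsHopfSub k) (hS' : S'.IsHopfSub k) (hle : S ≤ S') (hfg : S.FG) (hfg' : S'.FG)
    (φ : ttB ρ S →ₐ[k] k) :
    ∃ φ' : ttB ρ S' →ₐ[k] k, φ'.comp (Subalgebra.inclusion (ttB_mono ρ hle)) = φ := by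
  have hnt := hρ.nontrivial
  obtain ⟨K, _, _, p, -⟩ := tt_points (k := k) (1 : B) (fun ⟨n, hn⟩ => by simp at hn)
  let e := AlgEquiv.ofBijective (ttGS ρ S) (ttGS_bij hρ hS)
  let q : B ⊗[k] ttB ρ S →ₐ[k] K := Algebra.TensorProduct.lift p ((Algebra.ofId k K).comp φ)
    (fun _ _ => Commute.all _ _)
  let g : S →ₐ[k] K := (q.comp e.symm.toAlgHom).comp Algebra.TensorProduct.includeRight
  obtain ⟨L, _, _, j, g', hg'⟩ := tt_lift_sub hS hS' hle hfg hfg' g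
  let Φ : ttB ρ S' →ₐ[k] L := (Algebra.TensorProduct.lift (j.comp p) g'
    (fun _ _ => Commute.all _ _)).comp (ttRho ρ S')
  have hΦ : ∀ b : ttB ρ S, Φ (Subalgebra.inclusion (ttB_mono ρ hle) b) = algebraMap k L (φ b) := by
    intro b
    have h1 : ttRho ρ S' (Subalgebra.inclusion (ttB_mono ρ hle) b) =
        Algebra.TensorProduct.map (AlgHom.id k B) (Subalgebra.inclusion hle) (ttRho ρ S b) := by
      apply ttR_inj (X := B) S'
      rw [ttRho_spec]
      have h2 : (Algebra.TensorProduct.map (AlgHom.id k B) S'.val).comp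
        (Algebra.TensorProduct.map (AlgHom.id k B) (Subalgebra.inclusion hle)) =
        Algebra.TensorProduct.map (AlgHom.id k B) S.val := by
        ext <;> simp
      refine Eq.trans ?_ (DFunLike.congr_fun h2 (ttRho ρ S b)).symm
      exact (ttRho_spec S b).symm
    have h3 : (Algebra.TensorProduct.lift (j.comp p) g' (fun _ _ => Commute.all _ _)).comp
        (Algebra.TensorProduct.map (AlgHom.id k B) (Subalgebra.inclusion hle)) =
        j.comp (q.comp e.symm.toAlgHom) := by
      apply Algebra.TensorProduct.ext
      · apply AlgHom.ext
        intro b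
        have h4 : e.symm (b ⊗ₜ 1) = b ⊗ₜ 1 := by
          rw [AlgEquiv.symm_apply_eq]
          simp [e, ttGS]
        simp [h4, q]
      · apply AlgHom.ext
        intro s
        simpa [g] using DFunLike.congr_fun hg' s
    have h5 : e.symm (ttRho ρ S b) = 1 ⊗ₜ b := by
      rw [AlgEquiv.symm_apply_eq]
      simp [e, ttGS]
      exact (one_mul _).symm
    simp only [Φ, AlgHom.comp_apply, h1]
    refine (DFunLike.congr_fun h3 (ttRho ρ S b)).trans ?_
    simp [h5, q, Algebra.ofId_apply]
  have : Algebra.FiniteType k (ttB ρ S') := (ttB ρ S').fg_iff_finiteType.mp (tt_fg hρ hS' hfg')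
  let I : Ideal (ttB ρ S') :=
    (RingHom.ker φ).map (Subalgebra.inclusion (ttB_mono ρ hle))
  have hI : I ≤ RingHom.ker Φ := by
    rw [Ideal.map_le_iff_le_comap]
    intro b hb
    rw [RingHom.mem_ker] at hb
    rw [Ideal.mem_comap, RingHom.mem_ker]
    refine (hΦ b).trans ?_
    rw [hb, map_zero]
  obtain ⟨φ', hφ'⟩ := tt_null (k := k) I (fun h => by
    rw [h, top_le_iff] at hI
    exact RingHom.ker_ne_top Φ hI)
  refine ⟨φ', AlgHom.ext fun b => ?_⟩
  have h1 := hφ' _ (Ideal.mem_map_of_mem (Subalgebra.inclusion (ttB_mono ρ hle))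
    (show b - algebraMap k _ (φ b) ∈ RingHom.ker φ by simp [RingHom.mem_ker]))
  rw [map_sub, map_sub, AlgHom.commutes, AlgHom.commutes, sub_eq_zero] at h1
  exact h1

end torsor

/-- A compatible sequence of points on an increasing sequence of subalgebras. -/
lemma tt_tower {k B : Type} [Field k] [CommRing B] [Algebra k B] (C : ℕ → Subalgebra k B)
    (hmono : Monotone C) (hC : ∀ b, ∃ n, b ∈ C n) (h0 : Nonempty (C 0 →ₐ[k] k))
    (hs : ∀ n (φ : C n →ₐ[k] k), ∃ φ' : C (n + 1) →ₐ[k] k,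
      φ'.comp (Subalgebra.inclusion (hmono n.le_succ)) = φ) : Nonempty (B →ₐ[k] k) := by
  obtain ⟨φ0⟩ := h0
  choose nx hnx using hs
  let φ : ∀ n, C n →ₐ[k] k := fun n => Nat.rec φ0 (fun n f => nx n f) n
  have hφ : ∀ n, (φ (n + 1)).comp (Subalgebra.inclusion (hmono n.le_succ)) = φ n :=
    fun n => hnx n (φ n)
  have hle : ∀ i j (h : i ≤ j), φ i = (φ j).comp (Subalgebra.inclusion (hmono h)) := by
    intro i j h
    induction j, h using Nat.le_induction with
    | base => ext; rfl
    | succ j hij ih =>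
      rw [ih, ← hφ j]
      rfl
  have hle' : ∀ i j (h : C i ≤ C j), φ i = (φ j).comp (Subalgebra.inclusion h) := by
    intro i j h
    rcases le_total i j with hij | hij
    · exact hle i j hij
    · rw [hle j i hij]
      ext; rfl
  exact ⟨(Subalgebra.iSupLift C hmono.directed_le φ hle' ⊤ (by
    intro b _
    obtain ⟨n, hn⟩ := hC b
    exact (le_iSup C n) hn)).comp Subalgebra.topEquiv.symm.toAlgHom⟩

/-- Over an algebraically closed field `k`, if the commutative Hopf algebra `A` is the directed
union of finitely generated sub-Hopf-algebras indexed by an at most countable directed poset `I`,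
then every torsor algebra `B` for `A` admits a `k`-algebra homomorphism `B → k` (i.e. the
corresponding torsor is trivial). -/
theorem torsor_trivial_of_countable {k : Type} [Field k] [IsAlgClosed k]
    {A : Type} [CommRing A] [HopfAlgebra k A]
    {I : Type} [PartialOrder I] [Nonempty I] [IsDirected I (· ≤ ·)] [Countable I]
    (𝒜 : I → Subalgebra k A) (hmono : Monotone 𝒜)
    (hfg : ∀ i, (𝒜 i).FG) (hhopf : ∀ i, (𝒜 i).IsHopfSub k)
    (hunion : ∀ a : A, ∃ i, a ∈ 𝒜 i)
    {B : Type} [CommRing B] [Algebra k B]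
    (ρ : B →ₐ[k] B ⊗[k] A) (hρ : IsTorsorAlgebra k A B ρ) :
    Nonempty (B →ₐ[k] k) := by
  classical
  have : Encodable I := Encodable.ofCountable I
  have : Inhabited I := Classical.inhabited_of_nonempty inferInstance
  have hdir : Directed (· ≤ ·) 𝒜 := hmono.directed_le
  let s : ℕ → I := hdir.sequence 𝒜
  have hsm : Monotone (fun n => 𝒜 (s n)) := hdir.sequence_mono
  have hnt := hρ.nontrivial
  refine tt_tower (fun n => ttB ρ (𝒜 (s n))) (fun m n h => ttB_mono ρ (hsm h)) ?_ ?_ ?_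
  · intro b
    suffices h : ∀ t : B ⊗[k] A, ∃ i, t ∈ ttR B (𝒜 i) by
      obtain ⟨i, hi⟩ := h (ρ b)
      exact ⟨_, ttR_mono (hdir.le_sequence i) hi⟩
    intro t
    induction t with
    | zero => exact ⟨default, zero_mem _⟩
    | add x y hx hy =>
      obtain ⟨i, hi⟩ := hx
      obtain ⟨j, hj⟩ := hy
      obtain ⟨l, hil, hjl⟩ := hdir i j
      exact ⟨l, add_mem (ttR_mono hil hi) (ttR_mono hjl hj)⟩
    | tmul x y =>
      obtain ⟨i, hi⟩ := hunion y
      exact ⟨i, tmul_mem_ttR x hi⟩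
  · have : Algebra.FiniteType k (ttB ρ (𝒜 (s 0))) :=
      (ttB ρ (𝒜 (s 0))).fg_iff_finiteType.mp (tt_fg hρ (hhopf _) (hfg _))
    obtain ⟨φ, -⟩ := tt_null (k := k) (⊥ : Ideal (ttB ρ (𝒜 (s 0)))) bot_ne_top
    exact ⟨φ⟩
  · intro n φ
    exact tt_extend hρ (hhopf _) (hhopf _) (hsm n.le_succ) (hfg _) (hfg _) φ
end

section
/- Let k be an algebraically closed field and let A be a commutative Hopf algebra over k which is the union of a directed (under inclusion) family (A_i)_{i ∈ I} of finitely generated sub-Hopf-algebras, where the cardinality of the directed index poset I is strictly less than the cardinality of k. Then every torsor algebra B for A admits a k-algebra homomorphism B → k. (Equivalently: every torsor under the affine group scheme G = Spec A over k is trivial, i.e. has a k-rational point.) -/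
open TensorProduct

theorem rank_le_aleph0_of_fg {k : Type u} [Field k] {C : Type u} [CommRing C] [Algebra k C]
    [Algebra.FiniteType k C] : Module.rank k C ≤ Cardinal.aleph0 := by
  obtain ⟨n, f, hf⟩ := Algebra.FiniteType.iff_quotient_mvPolynomial''.1
    (inferInstance : Algebra.FiniteType k C)
  have h := LinearMap.lift_rank_le_of_surjective f.toLinearMap hf
  have h2 : Module.rank k (MvPolynomial (Fin n) k) ≤ Cardinal.aleph0 := by
    have h4 := (MvPolynomial.basisMonomials (Fin n) k).mk_eq_rank
    rw [← Cardinal.lift_le_aleph0, ← h4, Cardinal.lift_le_aleph0]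
    exact Cardinal.mk_le_aleph0
  have h3 := h.trans (Cardinal.lift_le.2 h2)
  rwa [Cardinal.lift_aleph0, Cardinal.lift_le_aleph0] at h3

/-- The Galois map as a `B`-algebra isomorphism. -/
theorem exists_galois_equiv {k : Type u} [Field k]
    {A : Type u} [CommRing A] [HopfAlgebra k A] {B : Type u} [CommRing B] [Algebra k B]
    (ρ : B →ₐ[k] B ⊗[k] A) (hρ : IsTorsorAlgebra k A B ρ) :
    Nonempty ((B ⊗[k] B) ≃ₐ[B] (B ⊗[k] A)) := by
  have hb := hρ.galois_bijective
  refine ⟨AlgEquiv.ofBijective (AlgHom.mk (RingHomClass.toRingHom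
    (Algebra.TensorProduct.lift (Algebra.TensorProduct.includeLeft : B →ₐ[k] B ⊗[k] A) ρ
      (fun _ _ => Commute.all _ _))) ?_) hb⟩
  intro b
  simp [Algebra.TensorProduct.algebraMap_apply]

/-- Over an algebraically closed field `k`, if the commutative Hopf algebra `A` is the directed
union of finitely generated sub-Hopf-algebras indexed by a directed poset `I` of cardinality
strictly less than that of `k`, then every torsor algebra `B` for `A` admits a `k`-algebra
homomorphism `B → k` (i.e. the corresponding torsor is trivial). -/
theorem torsor_trivial_of_small_card {k : Type u} [Field k] [IsAlgClosed k]
    {A : Type u} [CommRing A] [HopfAlgebra k A]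
    {I : Type u} [PartialOrder I] [Nonempty I] [IsDirected I (· ≤ ·)]
    (hcard : Cardinal.mk I < Cardinal.mk k)
    (𝒜 : I → Subalgebra k A) (hmono : Monotone 𝒜)
    (hfg : ∀ i, (𝒜 i).FG) (hhopf : ∀ i, (𝒜 i).IsHopfSub k)
    (hunion : ∀ a : A, ∃ i, a ∈ 𝒜 i)
    {B : Type u} [CommRing B] [Algebra k B]
    (ρ : B →ₐ[k] B ⊗[k] A) (hρ : IsTorsorAlgebra k A B ρ) :
    Nonempty (B →ₐ[k] k) := by
  have := hρ.nontrivial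
  obtain ⟨e⟩ := exists_galois_equiv ρ hρ
  obtain ⟨m, hm⟩ := Ideal.exists_maximal B
  let _ : Field (B ⧸ m) := Ideal.Quotient.field m
  suffices h : Algebra.IsAlgebraic k (B ⧸ m) by
    have hbij := IsAlgClosed.algebraMap_bijective_of_isIntegral (k := k) (K := B ⧸ m)
    exact ⟨(AlgEquiv.ofBijective (Algebra.ofId k (B ⧸ m)) hbij).symm.toAlgHom.comp
      (Ideal.Quotient.mkₐ k m)⟩
  cases finite_or_infinite I with
  | inl hI =>
    obtain ⟨M, hM⟩ := Finite.exists_le (id : I → I)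
    have htop : 𝒜 M = ⊤ := by
      rw [eq_top_iff]
      intro a _
      obtain ⟨i, hi⟩ := hunion a
      exact hmono (hM i) hi
    have hA : Algebra.FiniteType k A := ⟨htop ▸ hfg M⟩
    have hBA : Algebra.FiniteType B (B ⊗[k] A) := inferInstance
    have hBB : Algebra.FiniteType B (B ⊗[k] B) := hBA.equiv e.symm
    have hB : Algebra.FiniteType k B :=
      Algebra.FiniteType.of_finiteType_tensorProduct_of_faithfullyFlat B
    have hq : Algebra.FiniteType k (B ⧸ m) := inferInstance
    have hfin := finite_of_finite_type_of_isJacobsonRing k (B ⧸ m)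
    infer_instance
  | inr hI =>
    have hrA : Module.rank k A ≤ Cardinal.mk I := by
      have hr (i : I) : Module.rank k (𝒜 i) ≤ Cardinal.aleph0 := by
        have := (Subalgebra.fg_iff_finiteType _).1 (hfg i)
        exact rank_le_aleph0_of_fg
      let b (i : I) := Module.Free.chooseBasis k (𝒜 i)
      let v : (Σ i, Module.Free.ChooseBasisIndex k (𝒜 i)) → A := fun p => (b p.1 p.2 : A)
      have hspan : Submodule.span k (Set.range v) = ⊤ := by
        rw [eq_top_iff]
        intro a _
        obtain ⟨i, hi⟩ := hunion a
        have h1 : (⟨a, hi⟩ : 𝒜 i) ∈ Submodule.span k (Set.range (b i)) := by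
          rw [(b i).span_eq]; trivial
        have h2 := Submodule.mem_map_of_mem (f := (𝒜 i).val.toLinearMap) h1
        rw [Submodule.map_span] at h2
        refine Submodule.span_mono ?_ h2
        rintro _ ⟨_, ⟨j, rfl⟩, rfl⟩
        exact ⟨⟨i, j⟩, rfl⟩
      have h1 := rank_span_le (R := k) (Set.range v)
      rw [hspan, rank_top] at h1
      refine h1.trans (Cardinal.mk_range_le.trans ?_)
      rw [Cardinal.mk_sigma]
      refine (Cardinal.sum_le_sum _ (fun _ : I => Cardinal.aleph0) ?_).trans ?_
      · intro i
        rw [← Module.Free.rank_eq_card_chooseBasisIndex]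
        exact hr i
      · rw [Cardinal.sum_const']
        exact (Cardinal.mul_aleph0_eq (Cardinal.aleph0_le_mk I)).le
    have hrB : Module.rank k B = Module.rank k A := by
      have h := e.toLinearEquiv.rank_eq
      rwa [Module.rank_baseChange, Module.rank_baseChange, Cardinal.lift_id,
        Cardinal.lift_id] at h
    have hrq : Module.rank k (B ⧸ m) ≤ Module.rank k B :=
      LinearMap.rank_le_of_surjective (Ideal.Quotient.mkₐ k m).toLinearMap
        (Ideal.Quotient.mkₐ_surjective k m)
    refine ⟨fun x => ?_⟩
    by_contra hx
    have hx' : Transcendental k x := hx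
    have h := hx'.linearIndependent_sub_inv.cardinal_le_rank
    exact absurd (h.trans (hrq.trans (hrB.le.trans hrA))) (not_le.2 hcard)
end

section
/- Let k be an algebraically closed field and let B be a nonzero commutative k-algebra. Suppose B is the union of a monotone family (B_ω)_{ω ∈ Ω} of nonzero finitely generated k-subalgebras indexed by an at most countable directed poset Ω, such that for all ω₁ ≤ ω₂ in Ω the inclusion B_{ω₁} ⊆ B_{ω₂} makes B_{ω₂} a faithfully flat B_{ω₁}-algebra. Then there exists a k-algebra homomorphism B → k. -/
/-- A `k`-point of `A` extends along a faithfully flat map to a finite type algebra. -/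
theorem extend_point {k A C : Type} [Field k] [IsAlgClosed k] [CommRing A] [CommRing C]
    [Algebra k A] [Algebra k C] [Algebra A C] [IsScalarTower k A C]
    [Module.FaithfullyFlat A C] [Algebra.FiniteType k C] (φ : A →ₐ[k] k) :
    ∃ ψ : C →ₐ[k] k, ∀ a, ψ (algebraMap A C a) = φ a := by
  have hmax : (RingHom.ker φ).IsMaximal :=
    RingHom.ker_isMaximal_of_surjective φ (fun c => ⟨algebraMap k A c, by simp⟩)
  have hne : (RingHom.ker φ).map (algebraMap A C) ≠ ⊤ := by
    intro h
    have h2 := Ideal.comap_map_eq_self_of_faithfullyFlat (B := C) (RingHom.ker φ)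
    rw [h, Ideal.comap_top] at h2
    exact hmax.ne_top h2.symm
  obtain ⟨J, hJ, hle⟩ := Ideal.exists_le_maximal _ hne
  let : Field (C ⧸ J) := Ideal.Quotient.field J
  have : Algebra.FiniteType k (C ⧸ J) :=
    Algebra.FiniteType.of_surjective (Ideal.Quotient.mkₐ k J) (Ideal.Quotient.mkₐ_surjective k J)
  have : Module.Finite k (C ⧸ J) := finite_of_finite_type_of_isJacobsonRing _ _
  have hb := IsAlgClosed.algebraMap_bijective_of_isIntegral (k := k) (K := C ⧸ J)
  let e : k ≃ₐ[k] (C ⧸ J) := AlgEquiv.ofBijective (Algebra.ofId k (C ⧸ J)) hb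
  let ψ : C →ₐ[k] k := (e.symm : (C ⧸ J) →ₐ[k] k).comp (Ideal.Quotient.mkₐ k J)
  refine ⟨ψ, fun a => ?_⟩
  have hmem : a - algebraMap k A (φ a) ∈ RingHom.ker φ := by simp [RingHom.mem_ker]
  have h1 : algebraMap A C (a - algebraMap k A (φ a)) ∈ J :=
    hle (Ideal.mem_map_of_mem _ hmem)
  have h2 : ψ (algebraMap A C (a - algebraMap k A (φ a))) = 0 := by
    have : Ideal.Quotient.mkₐ k J (algebraMap A C (a - algebraMap k A (φ a))) = 0 :=
      Ideal.Quotient.eq_zero_iff_mem.mpr h1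
    change e.symm _ = 0
    exact (congrArg e.symm this).trans (map_zero e.symm)
  rw [map_sub, map_sub, sub_eq_zero, ← IsScalarTower.algebraMap_apply] at h2
  rw [h2, AlgHom.commutes]; rfl

/-- Over an algebraically closed field `k`, a nonzero commutative `k`-algebra `B` which is the
union of a monotone family of nonzero finitely generated `k`-subalgebras, indexed by an at most
countable directed poset `Ω`, with all inclusions (for `ω₁ ≤ ω₂`) faithfully flat, admits a
`k`-algebra homomorphism `B → k`. -/
theorem exists_algHom_of_countable_directed_union {k : Type} [Field k] [IsAlgClosed k]
    {B : Type} [CommRing B] [Algebra k B] [Nontrivial B]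
    {Ω : Type} [PartialOrder Ω] [Nonempty Ω] [Countable Ω] [IsDirected Ω (· ≤ ·)]
    (ℬ : Ω → Subalgebra k B) (hm : Monotone ℬ)
    (hfg : ∀ ω, (ℬ ω).FG) (hnt : ∀ ω, Nontrivial (ℬ ω))
    (hunion : ∀ b : B, ∃ ω, b ∈ ℬ ω)
    (hff : ∀ ω₁ ω₂ : Ω, ∀ h : ω₁ ≤ ω₂,
      letI : Algebra (ℬ ω₁) (ℬ ω₂) := (Subalgebra.inclusion (hm h)).toRingHom.toAlgebra
      Module.FaithfullyFlat (ℬ ω₁) (ℬ ω₂)) :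
    Nonempty (B →ₐ[k] k) := by
  classical
  have hft : ∀ ω, Algebra.FiniteType k (ℬ ω) := fun ω =>
    (Subalgebra.fg_iff_finiteType _).mp (hfg ω)
  have hext : ∀ ω₁ ω₂ (h : ω₁ ≤ ω₂) (φ : ℬ ω₁ →ₐ[k] k), ∃ ψ : ℬ ω₂ →ₐ[k] k,
      ∀ a, ψ (Subalgebra.inclusion (hm h) a) = φ a := by
    intro ω₁ ω₂ h φ
    letI : Algebra (ℬ ω₁) (ℬ ω₂) := (Subalgebra.inclusion (hm h)).toRingHom.toAlgebra
    have : Module.FaithfullyFlat (ℬ ω₁) (ℬ ω₂) := hff ω₁ ω₂ h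
    have : IsScalarTower k (ℬ ω₁) (ℬ ω₂) :=
      IsScalarTower.of_algebraMap_eq (fun x => rfl)
    have := hft ω₂
    exact extend_point φ
  obtain ⟨s, hs, hst⟩ := Filter.exists_seq_monotone_tendsto_atTop_atTop Ω
  -- an initial point
  have h0 : Nonempty (ℬ (s 0) →ₐ[k] k) := by
    have := hnt (s 0)
    have := hft (s 0)
    have : Module.FaithfullyFlat k (ℬ (s 0)) := inferInstance
    obtain ⟨ψ, -⟩ := extend_point (C := ℬ (s 0)) (AlgHom.id k k)
    exact ⟨ψ⟩
  obtain ⟨φ0⟩ := h0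
  choose E hE using hext
  let φ : ∀ n, ℬ (s n) →ₐ[k] k := fun n =>
    Nat.rec φ0 (fun n f => E (s n) (s (n + 1)) (hs n.le_succ) f) n
  have hφ : ∀ n a, φ (n + 1) (Subalgebra.inclusion (hm (hs n.le_succ)) a) = φ n a :=
    fun n a => hE (s n) (s (n + 1)) (hs n.le_succ) (φ n) a
  have hφ2 : ∀ m n (h : m ≤ n), φ m = (φ n).comp (Subalgebra.inclusion (hm (hs h))) := by
    intro m n h
    induction n, h using Nat.le_induction with
    | base => ext a; rfl
    | succ n hn ih =>
      ext a
      rw [ih]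
      exact (hφ n _).symm
  have hmono : Monotone (fun n => ℬ (s n)) := hm.comp hs
  have htop : (⊤ : Subalgebra k B) ≤ ⨆ n, ℬ (s n) := by
    intro b _
    obtain ⟨ω, hω⟩ := hunion b
    obtain ⟨n, hn⟩ := (hst.eventually (Filter.eventually_ge_atTop ω)).exists
    exact (le_iSup (fun n => ℬ (s n)) n) (hm hn hω)
  have dir : Directed (· ≤ ·) (fun n => ℬ (s n)) := hmono.directed_le
  exact ⟨(Subalgebra.iSupLift (fun n => ℬ (s n)) dir φ
    (fun i j h => by
      rcases le_total i j with hij | hij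
      · exact hφ2 i j hij
      · rw [hφ2 j i hij]
        ext a
        rfl) ⊤ htop).comp
    (Subalgebra.topEquiv (R := k) (A := B)).symm.toAlgHom⟩
end

section
/- Let k be an algebraically closed field and let B be a nonzero commutative k-algebra which is generated (as a k-algebra) by a set of generators whose cardinality is strictly less than the cardinality of k. Then there exists a k-algebra homomorphism B → k. Equivalently: if S = k[T_i : i ∈ I] is a polynomial ring over k in a set of variables with card I < card k and 𝔰 ⊊ S is a proper ideal, then there is a maximal ideal 𝔪 of S with 𝔰 ⊆ 𝔪 and S/𝔪 = k. -/
/-- A field extension of `k` that is a quotient of a polynomial ring in fewer than `card k`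
variables is algebraic. -/
theorem small_card_isAlgebraic {k L σ : Type u} [Field k] [IsAlgClosed k] [Field L] [Algebra k L]
    (f : MvPolynomial σ k →ₐ[k] L) (hf : Function.Surjective f)
    (hσ : Cardinal.mk σ < Cardinal.mk k) : Algebra.IsAlgebraic k L := by
  rcases finite_or_infinite σ with h | h
  · have : Algebra.FiniteType k L := Algebra.FiniteType.of_surjective f hf
    have : Module.Finite k L := finite_of_finite_type_of_isJacobsonRing k L
    infer_instance
  · refine ⟨fun x => ?_⟩
    by_contra hx
    have hx : Transcendental k x := hx
    have h2 := hx.linearIndependent_sub_inv.cardinal_le_rank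
    have h3 : Module.rank k L ≤ Module.rank k (MvPolynomial σ k) :=
      LinearMap.rank_le_of_surjective f.toLinearMap hf
    have h4 : Module.rank k (MvPolynomial σ k) = Cardinal.mk σ := by
      rw [← (MvPolynomial.basisMonomials σ k).mk_eq_rank'']
      simp
    exact absurd (h2.trans (h3.trans h4.le)) (not_le.mpr hσ)

theorem small_card_hom {k σ B : Type u} [Field k] [IsAlgClosed k] [CommRing B] [Algebra k B]
    [Nontrivial B] (f : MvPolynomial σ k →ₐ[k] B) (hf : Function.Surjective f)
    (hσ : Cardinal.mk σ < Cardinal.mk k) : Nonempty (B →ₐ[k] k) := by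
  obtain ⟨M, hM⟩ := Ideal.exists_maximal B
  letI : Field (B ⧸ M) := Ideal.Quotient.field M
  have : Algebra.IsAlgebraic k (B ⧸ M) := small_card_isAlgebraic
    ((Ideal.Quotient.mkₐ k M).comp f) ((Ideal.Quotient.mkₐ_surjective k M).comp hf) hσ
  exact ⟨(IsAlgClosed.lift : (B ⧸ M) →ₐ[k] k).comp (Ideal.Quotient.mkₐ k M)⟩


/-- Hilbert's Nullstellensatz in possibly infinitely many variables: over an algebraically closed
field `k`, (1) every nonzero commutative `k`-algebra generated by strictly fewer than `card k`
elements admits a `k`-algebra homomorphism to `k`; equivalently, (2) every proper ideal `𝔰` of a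
polynomial ring `k[Tᵢ : i ∈ I]` with `card I < card k` is contained in a maximal ideal `𝔪` with
residue field `k`. -/
theorem nullstellensatz_small_card {k : Type u} [Field k] [IsAlgClosed k] :
    (∀ (B : Type u) [CommRing B] [Algebra k B] [Nontrivial B] (s : Set B),
      Cardinal.mk s < Cardinal.mk k → Algebra.adjoin k s = ⊤ →
      Nonempty (B →ₐ[k] k)) ∧
    (∀ (I : Type u) (𝔰 : Ideal (MvPolynomial I k)),
      Cardinal.mk I < Cardinal.mk k → 𝔰 ≠ ⊤ →
      ∃ 𝔪 : Ideal (MvPolynomial I k), 𝔰 ≤ 𝔪 ∧ 𝔪.IsMaximal ∧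
        Nonempty ((MvPolynomial I k ⧸ 𝔪) ≃ₐ[k] k)) := by
  refine ⟨fun B _ _ _ s hs h => ?_, fun I J hI hJ => ?_⟩
  · refine small_card_hom (MvPolynomial.aeval (Subtype.val : s → B)) ?_ hs
    rw [← AlgHom.range_eq_top, ← Algebra.adjoin_range_eq_range_aeval, Subtype.range_coe, h]
  · have : Nontrivial (MvPolynomial I k ⧸ J) := Ideal.Quotient.nontrivial_iff.mpr hJ
    obtain ⟨g⟩ := small_card_hom (Ideal.Quotient.mkₐ k J) (Ideal.Quotient.mkₐ_surjective k J) hI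
    let φ : MvPolynomial I k →ₐ[k] k := g.comp (Ideal.Quotient.mkₐ k J)
    have hφ : Function.Surjective φ := fun c => ⟨algebraMap k _ c, by simp⟩
    refine ⟨RingHom.ker φ, fun x hx => ?_, RingHom.ker_isMaximal_of_surjective φ hφ,
      ⟨Ideal.quotientKerAlgEquivOfSurjective hφ⟩⟩
    have : Ideal.Quotient.mk J x = 0 := Ideal.Quotient.eq_zero_iff_mem.mpr hx
    simp [RingHom.mem_ker, φ, this]
end

section
/- Let k be a field, let R be a nonzero commutative k-algebra, and let B′ ⊆ B be an inclusion of commutative k-algebras. If the induced inclusion of R-algebras B′ ⊗_k R ⊆ B ⊗_k R makes B ⊗_k R a faithfully flat (B′ ⊗_k R)-algebra, then B is a faithfully flat B′-algebra. -/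
open TensorProduct

/-- Faithful flatness descends along the faithfully flat base change `- ⊗_k R` over a field `k`:
if `B′ ⊆ B` are commutative `k`-algebras, `R` is a nonzero commutative `k`-algebra, and
`B ⊗_k R` is faithfully flat over `B′ ⊗_k R`, then `B` is faithfully flat over `B′`. -/
theorem faithfullyFlat_of_tensor_faithfullyFlat {k : Type} [Field k]
    {R : Type} [CommRing R] [Algebra k R] [Nontrivial R]
    {B : Type} [CommRing B] [Algebra k B] (B' : Subalgebra k B)
    (hff : letI alg : Algebra (B' ⊗[k] R) (B ⊗[k] R) :=
        (Algebra.TensorProduct.map B'.val (AlgHom.id k R)).toRingHom.toAlgebra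
      letI : Module (B' ⊗[k] R) (B ⊗[k] R) := alg.toModule
      Module.FaithfullyFlat (B' ⊗[k] R) (B ⊗[k] R)) :
    Module.FaithfullyFlat B' B := by
  letI alg : Algebra (B' ⊗[k] R) (B ⊗[k] R) :=
    (Algebra.TensorProduct.map B'.val (AlgHom.id k R)).toRingHom.toAlgebra
  have h1 : Module.FaithfullyFlat (B' ⊗[k] R) (B ⊗[k] R) := hff
  have : IsScalarTower B' (B' ⊗[k] R) (B ⊗[k] R) := by
    refine IsScalarTower.of_algebraMap_eq (R := B') (S := B' ⊗[k] R) (A := B ⊗[k] R) fun x => ?_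
    change (x : B) ⊗ₜ[k] (1 : R) =
      (Algebra.TensorProduct.map B'.val (AlgHom.id k R)) (x ⊗ₜ[k] (1 : R))
    simp
  have h2 : Module.FaithfullyFlat B' (B ⊗[k] R) := .trans B' (B' ⊗[k] R) (B ⊗[k] R)
  obtain ⟨f, hf⟩ : ∃ f : R →ₗ[k] k, f 1 = 1 := by
    obtain ⟨f, hf⟩ := LinearMap.exists_leftInverse_of_injective (Algebra.linearMap k R)
      (LinearMap.ker_eq_bot.mpr (FaithfulSMul.algebraMap_injective k R))
    exact ⟨f, by simpa using LinearMap.congr_fun hf 1⟩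
  have h3 : Module.Flat B' B := by
    refine Module.Flat.of_retract (M := B ⊗[k] R)
      (IsScalarTower.toAlgHom B' B (B ⊗[k] R)).toLinearMap
      ((TensorProduct.AlgebraTensorModule.rid k B' B).toLinearMap ∘ₗ
        TensorProduct.AlgebraTensorModule.map (LinearMap.id : B →ₗ[B'] B) f) ?_
    ext x
    change f 1 • x = x
    rw [hf, one_smul]
  refine Module.FaithfullyFlat.of_comap_surjective fun p => ?_
  obtain ⟨q, hq⟩ := PrimeSpectrum.comap_surjective_of_faithfullyFlat (B := B ⊗[k] R) p
  refine ⟨PrimeSpectrum.comap (algebraMap B (B ⊗[k] R)) q, ?_⟩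
  rw [← hq, ← PrimeSpectrum.comap_comp_apply, ← IsScalarTower.algebraMap_eq]
end
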